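/- arXiv:2001.02226 — 5 statements merged into one kernel-verified Lean document; each statement's English description precedes it below -/
import Mathlib

section
/- Let ν ≥ 1, let N ⊆ ℝ^ν be a compact connected smooth embedded submanifold without boundary with base point b ∈ N, let ℓ ≥ 1, and let p > ℓ + 1 be a real number. Let (w_j)_{j∈ℕ} be a sequence of continuous maps w_j : B̄^ℓ → N with w_j = b on S^{ℓ−1}, such that for all j ≠ k the maps w_j and w_k are not homotopic relative to S^{ℓ−1}. Then E^{1−1/p, p}_{B^ℓ}(w_j) → ∞ as j → ∞, i.e., for every M > 0 one has E^{1−1/p, p}_{B^ℓ}(w_j) ≥ M for all but finitely many j. -/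
open Metric Set MeasureTheory Filter
open scoped ENNReal Topology

noncomputable section

/-- `N ⊆ ℝ^ν` is a smooth embedded submanifold without boundary: around each of its points
there is a smooth local diffeomorphism of the ambient space flattening `N` onto a
`d`-dimensional coordinate subspace. -/
def IsSmoothSubmanifold {ν : ℕ} (N : Set (EuclideanSpace ℝ (Fin ν))) : Prop :=
  ∃ d : ℕ, ∀ x ∈ N, ∃ (U V : Set (EuclideanSpace ℝ (Fin ν)))
      (φ ψ : EuclideanSpace ℝ (Fin ν) → EuclideanSpace ℝ (Fin ν)),
    IsOpen U ∧ IsOpen V ∧ x ∈ U ∧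
    ContDiffOn ℝ (⊤ : ℕ∞) φ U ∧ ContDiffOn ℝ (⊤ : ℕ∞) ψ V ∧
    MapsTo φ U V ∧ MapsTo ψ V U ∧
    (∀ y ∈ U, ψ (φ y) = y) ∧ (∀ z ∈ V, φ (ψ z) = z) ∧
    (∀ y ∈ U, (y ∈ N ↔ ∀ i : Fin ν, d ≤ (i : ℕ) → φ y i = 0))

/-- The Gagliardo fractional energy `E^{s,p}_A(u)`. -/
def gagliardoE {l ν : ℕ} (s p : ℝ) (A : Set (EuclideanSpace ℝ (Fin l)))
    (u : EuclideanSpace ℝ (Fin l) → EuclideanSpace ℝ (Fin ν)) : ℝ≥0∞ :=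
  ∫⁻ x in A, ∫⁻ y in A, ENNReal.ofReal (‖u y - u x‖ ^ p / ‖y - x‖ ^ ((l : ℝ) + s * p))

/-- `f` is `C^1` on the closed set `A` in the sense that it is (the restriction of)
a `C^1` map on an open neighborhood of `A`. -/
def C1OnNhd {E F : Type*} [NormedAddCommGroup E] [NormedSpace ℝ E]
    [NormedAddCommGroup F] [NormedSpace ℝ F] (f : E → F) (A : Set E) : Prop :=
  ∃ V : Set E, IsOpen V ∧ A ⊆ V ∧ ContDiffOn ℝ 1 f V

/-- `f` is `C^∞` on the closed set `A` in the sense that it is (the restriction of)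
a smooth map on an open neighborhood of `A`. -/
def SmoothOnNhd {E F : Type*} [NormedAddCommGroup E] [NormedSpace ℝ E]
    [NormedAddCommGroup F] [NormedSpace ℝ F] (f : E → F) (A : Set E) : Prop :=
  ∃ V : Set E, IsOpen V ∧ A ⊆ V ∧ ContDiffOn ℝ (⊤ : ℕ∞) f V

/-- The `C^1` extension `p`-energy `E^{1,p}_ext(u)` of a map `u : B̄^l → N`:
the infimum (in `ℝ≥0∞`, so `sInf ∅ = ∞`) of `∫_{B^l × (0,1)} ‖DU‖^p` over all `C^1` maps
`U : B̄^l × [0,1] → N` with `U(·,0) = u`. -/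
def extEnergy {l ν : ℕ} (p : ℝ) (N : Set (EuclideanSpace ℝ (Fin ν)))
    (u : EuclideanSpace ℝ (Fin l) → EuclideanSpace ℝ (Fin ν)) : ℝ≥0∞ :=
  sInf { e | ∃ U : EuclideanSpace ℝ (Fin l) × ℝ → EuclideanSpace ℝ (Fin ν),
    C1OnNhd U (closedBall 0 1 ×ˢ Icc (0 : ℝ) 1) ∧
    MapsTo U (closedBall 0 1 ×ˢ Icc (0 : ℝ) 1) N ∧
    (∀ x ∈ closedBall (0 : EuclideanSpace ℝ (Fin l)) 1, U (x, 0) = u x) ∧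
    e = ∫⁻ z in ball (0 : EuclideanSpace ℝ (Fin l)) 1 ×ˢ Ioo (0 : ℝ) 1,
          ENNReal.ofReal (‖fderiv ℝ U z‖ ^ p) }

/-- `f` and `g`, mapping `B̄^l` into `N` and agreeing on `S^{l-1}`, are homotopic within `N`
relative to the sphere `S^{l-1}`. -/
def HomotopicRelSphere {l ν : ℕ} (N : Set (EuclideanSpace ℝ (Fin ν)))
    (f g : EuclideanSpace ℝ (Fin l) → EuclideanSpace ℝ (Fin ν)) : Prop :=
  ∃ H : EuclideanSpace ℝ (Fin l) × ℝ → EuclideanSpace ℝ (Fin ν),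
    ContinuousOn H (closedBall 0 1 ×ˢ Icc (0 : ℝ) 1) ∧
    MapsTo H (closedBall 0 1 ×ˢ Icc (0 : ℝ) 1) N ∧
    (∀ x ∈ closedBall (0 : EuclideanSpace ℝ (Fin l)) 1, H (x, 0) = f x ∧ H (x, 1) = g x) ∧
    (∀ x ∈ sphere (0 : EuclideanSpace ℝ (Fin l)) 1, ∀ t ∈ Icc (0 : ℝ) 1, H (x, t) = f x)

/-- The topological `p`-energy `E^{1,p}_top(u)` of `u : B̄^l → N` with `u = b` on `S^{l-1}`:
the infimum (in `ℝ≥0∞`) of `∫_{B^l} ‖Dw‖^p` over all `C^1` maps `w : B̄^l → N` with `w = b` on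
`S^{l-1}` that are homotopic to `u` relative to `S^{l-1}`. -/
def topEnergy {l ν : ℕ} (p : ℝ) (N : Set (EuclideanSpace ℝ (Fin ν)))
    (b : EuclideanSpace ℝ (Fin ν))
    (u : EuclideanSpace ℝ (Fin l) → EuclideanSpace ℝ (Fin ν)) : ℝ≥0∞ :=
  sInf { e | ∃ w : EuclideanSpace ℝ (Fin l) → EuclideanSpace ℝ (Fin ν),
    C1OnNhd w (closedBall 0 1) ∧ MapsTo w (closedBall 0 1) N ∧
    (∀ x ∈ sphere (0 : EuclideanSpace ℝ (Fin l)) 1, w x = b) ∧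
    HomotopicRelSphere N w u ∧
    e = ∫⁻ x in ball (0 : EuclideanSpace ℝ (Fin l)) 1, ENNReal.ofReal (‖fderiv ℝ w x‖ ^ p) }


/-- `a` is a nearest point of `N` to `y`. -/
def IsNearestPt {F : Type*} [NormedAddCommGroup F] (N : Set F) (y a : F) : Prop :=
  a ∈ N ∧ ∀ z ∈ N, ‖y - a‖ ≤ ‖y - z‖

/-- Quadratic Taylor estimate, from a Lipschitz derivative. -/
lemma taylor_quadratic {F : Type*} [NormedAddCommGroup F] [NormedSpace ℝ F]
    {ψ : F → F} {S : Set F} {K : NNReal} (hS : Convex ℝ S)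
    (hd : ∀ z ∈ S, DifferentiableAt ℝ ψ z) (hL : LipschitzOnWith K (fderiv ℝ ψ) S)
    {z z' : F} (hz : z ∈ S) (hz' : z' ∈ S) :
    ‖ψ z' - ψ z - fderiv ℝ ψ z (z' - z)‖ ≤ K * ‖z' - z‖ ^ 2 := by
  have h1 : z ∈ S ∩ closedBall z ‖z' - z‖ := ⟨hz, mem_closedBall_self (norm_nonneg _)⟩
  have h2 : z' ∈ S ∩ closedBall z ‖z' - z‖ := ⟨hz', by simp [dist_eq_norm]⟩
  have := Convex.norm_image_sub_le_of_norm_hasFDerivWithin_le' (𝕜 := ℝ) (f := ψ)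
    (f' := fderiv ℝ ψ) (φ := fderiv ℝ ψ z) (C := K * ‖z' - z‖)
    (s := S ∩ closedBall z ‖z' - z‖)
    (fun x hx => (hd x hx.1).hasFDerivAt.hasFDerivWithinAt)
    (fun x hx => by
      have h3 := hL.norm_sub_le hx.1 hz
      refine h3.trans ?_
      have : ‖x - z‖ ≤ ‖z' - z‖ := by simpa [dist_eq_norm] using hx.2
      gcongr)
    (hS.inter (convex_closedBall _ _)) h1 h2
  calc _ ≤ _ := this
    _ = _ := by ring

/-- Local positive reach. -/
lemma local_reach {ν : ℕ} {N : Set (EuclideanSpace ℝ (Fin ν))} (hN : IsSmoothSubmanifold N)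
    (x₀ : EuclideanSpace ℝ (Fin ν)) (hx₀ : x₀ ∈ N) :
    ∃ δ > 0, ∃ C ≥ (0 : ℝ), ∀ a ∈ ball x₀ δ, ∀ a' ∈ ball x₀ δ, ∀ y, a' ∈ N → IsNearestPt N y a →
      inner ℝ (y - a) (a' - a) ≤ C * ‖y - a‖ * ‖a' - a‖ ^ 2 := by
  obtain ⟨d, hd⟩ := hN
  obtain ⟨U, V, φ, ψ, hU, hV, hxU, hφ, hψ, hφm, hψm, hψφ, hφψ, hNU⟩ := hd x₀ hx₀
  have hp0 : φ x₀ ∈ V := hφm hxU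
  have hφa : ContDiffAt ℝ 1 φ x₀ :=
    (hφ.contDiffAt (hU.mem_nhds hxU)).of_le (by exact_mod_cast le_top)
  have hψa : ContDiffAt ℝ 2 ψ (φ x₀) :=
    (hψ.contDiffAt (hV.mem_nhds hp0)).of_le (WithTop.coe_le_coe.2 (le_top : (2 : ℕ∞) ≤ ⊤))
  obtain ⟨K₁, t₁, ht₁, hK₁⟩ := hφa.exists_lipschitzOnWith
  have hψd : ContDiffAt ℝ 1 (fderiv ℝ ψ) (φ x₀) := hψa.fderiv_right (by norm_num)
  obtain ⟨K₂, t₂, ht₂, hK₂⟩ := hψd.exists_lipschitzOnWith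
  obtain ⟨ρ, hρ, hρs⟩ := Metric.mem_nhds_iff.1 (inter_mem ht₂ (hV.mem_nhds hp0))
  have hpre : φ ⁻¹' (ball (φ x₀) ρ) ∈ 𝓝 x₀ := hφa.continuousAt (ball_mem_nhds _ hρ)
  obtain ⟨δ, hδ, hδs⟩ := Metric.mem_nhds_iff.1
    (inter_mem (inter_mem ht₁ (hU.mem_nhds hxU)) hpre)
  have hconv : Convex ℝ (ball (φ x₀) ρ) := convex_ball _ _
  have hdiff : ∀ z ∈ ball (φ x₀) ρ, DifferentiableAt ℝ ψ z := fun z hz =>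
    (hψ.contDiffAt (hV.mem_nhds (hρs hz).2)).differentiableAt (by simp)
  have hLip : LipschitzOnWith K₂ (fderiv ℝ ψ) (ball (φ x₀) ρ) :=
    hK₂.mono (fun z hz => (hρs hz).1)
  refine ⟨δ, hδ, K₂ * K₁ ^ 2, by positivity, ?_⟩
  intro a ha a' ha' y ha'N hnear
  obtain ⟨⟨hat, haU⟩, haP⟩ := hδs ha
  obtain ⟨⟨hat', haU'⟩, haP'⟩ := hδs ha'
  have haN := hnear.1
  have hP0 := (hNU a haU).1 haN
  have hQ0 := (hNU a' haU').1 ha'N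
  set P := φ a with hP
  set Q := φ a' with hQ
  have hPS : P ∈ ball (φ x₀) ρ := haP
  have hQS : Q ∈ ball (φ x₀) ρ := haP'
  have hψP : ψ P = a := hψφ a haU
  have hψQ : ψ Q = a' := hψφ a' haU'
  set h := Q - P with hh
  set D := fderiv ℝ ψ P with hD
  set v := y - a with hv
  have hcurve : ∀ t ∈ Icc (0 : ℝ) 1, P + t • h ∈ ball (φ x₀) ρ := fun t ht =>
    hconv.add_smul_sub_mem hPS hQS ht
  have hcN : ∀ t ∈ Icc (0 : ℝ) 1, ψ (P + t • h) ∈ N := by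
    intro t ht
    have hm := (hρs (hcurve t ht)).2
    refine (hNU _ (hψm hm)).2 fun i hi => ?_
    rw [hφψ _ hm]
    simp [hh, hP0 i hi, hQ0 i hi]
  have hT : ∀ t ∈ Icc (0 : ℝ) 1, ‖ψ (P + t • h) - a - t • D h‖ ≤ K₂ * (t * ‖h‖) ^ 2 := by
    intro t ht
    have := taylor_quadratic hconv hdiff hLip hPS (hcurve t ht)
    rw [hψP] at this
    simpa [norm_smul, abs_of_nonneg ht.1] using this
  have hDh : inner ℝ v (D h) ≤ 0 := by
    set B := ‖D h‖ + K₂ * ‖h‖ ^ 2 with hB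
    have key : ∀ t ∈ Ioc (0 : ℝ) 1, inner ℝ v (D h) ≤ t * (‖v‖ * (K₂ * ‖h‖ ^ 2) + B ^ 2 / 2) := by
      intro t ht
      have ht' : t ∈ Icc (0 : ℝ) 1 := ⟨ht.1.le, ht.2⟩
      have h1 := hT t ht'
      set c := ψ (P + t • h) - a with hc
      have h2 : ‖v‖ ≤ ‖v - c‖ := by
        have := hnear.2 _ (hcN t ht')
        have e : v - c = y - ψ (P + t • h) := by simp [hv, hc]
        rwa [e]
      have h3 : ‖v - c‖ ^ 2 = ‖v‖ ^ 2 - 2 * inner ℝ v c + ‖c‖ ^ 2 := norm_sub_sq_real v c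
      have h4 : 2 * inner ℝ v c ≤ ‖c‖ ^ 2 := by
        have : ‖v‖ ^ 2 ≤ ‖v - c‖ ^ 2 := by gcongr
        linarith
      have h5 : inner ℝ v c = t * inner ℝ v (D h) + inner ℝ v (c - t • D h) := by
        rw [inner_sub_right v c, inner_smul_right]; ring
      have h6 : |inner ℝ v (c - t • D h)| ≤ ‖v‖ * (K₂ * (t * ‖h‖) ^ 2) :=
        (abs_real_inner_le_norm _ _).trans (by gcongr)
      have h7 : ‖c‖ ≤ t * B := by
        have : ‖c‖ ≤ ‖c - t • D h‖ + ‖t • D h‖ := by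
          simpa using norm_add_le (c - t • D h) (t • D h)
        rw [norm_smul, Real.norm_of_nonneg ht.1.le] at this
        have ht2 : t ^ 2 ≤ t := by nlinarith [ht.1, ht.2]
        have : (K₂ : ℝ) * (t * ‖h‖) ^ 2 ≤ t * (K₂ * ‖h‖ ^ 2) := by
          rw [mul_pow]
          have := mul_le_mul_of_nonneg_right ht2 (show 0 ≤ (K₂ : ℝ) * ‖h‖ ^ 2 by positivity)
          nlinarith
        rw [hB]; nlinarith
      have h8 : ‖c‖ ^ 2 ≤ (t * B) ^ 2 := by gcongr
      have h9 : t * inner ℝ v (D h) ≤ t * (t * (‖v‖ * (K₂ * ‖h‖ ^ 2) + B ^ 2 / 2)) := by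
        have := (abs_le.1 h6).1
        nlinarith
      exact le_of_mul_le_mul_left h9 ht.1
    have hlim : Tendsto (fun t : ℝ => t * (‖v‖ * (K₂ * ‖h‖ ^ 2) + B ^ 2 / 2)) (𝓝[>] 0) (𝓝 0) := by
      have : Tendsto (fun t : ℝ => t * (‖v‖ * (K₂ * ‖h‖ ^ 2) + B ^ 2 / 2)) (𝓝 0)
        (𝓝 (0 * (‖v‖ * (K₂ * ‖h‖ ^ 2) + B ^ 2 / 2))) := tendsto_id.mul_const _
      rw [zero_mul] at this
      exact this.mono_left nhdsWithin_le_nhds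
    refine ge_of_tendsto hlim ?_
    filter_upwards [Ioc_mem_nhdsGT (show (0 : ℝ) < 1 by norm_num)] with t ht using key t ht
  have hfin := hT 1 (by simp)
  have e1 : P + (1 : ℝ) • h = Q := by simp [hh]
  rw [e1, hψQ, one_smul, one_mul] at hfin
  have h5 : inner ℝ v (a' - a) = inner ℝ v (D h) + inner ℝ v (a' - a - D h) := by
    rw [inner_sub_right _ (a' - a)]; ring
  have h6 : |inner ℝ v (a' - a - D h)| ≤ ‖v‖ * (K₂ * ‖h‖ ^ 2) :=
    (abs_real_inner_le_norm _ _).trans (by gcongr)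
  have h7 : ‖h‖ ≤ K₁ * ‖a' - a‖ := hK₁.norm_sub_le hat' hat
  have h8 : ‖h‖ ^ 2 ≤ (K₁ * ‖a' - a‖) ^ 2 := by gcongr
  calc inner ℝ v (a' - a) ≤ ‖v‖ * (K₂ * ‖h‖ ^ 2) := by linarith [le_abs_self (inner ℝ v (a' - a - D h))]
    _ ≤ ‖v‖ * (K₂ * (K₁ * ‖a' - a‖) ^ 2) := by gcongr
    _ = _ := by ring

/-- Locally the nearest point is unique. -/
lemma local_unique {ν : ℕ} {N : Set (EuclideanSpace ℝ (Fin ν))} (hN : IsSmoothSubmanifold N)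
    (x₀ : EuclideanSpace ℝ (Fin ν)) (hx₀ : x₀ ∈ N) :
    ∃ ε > 0, ∀ y ∈ ball x₀ ε, ∀ a a', IsNearestPt N y a → IsNearestPt N y a' → a' = a := by
  obtain ⟨δ, hδ, C, hC, H⟩ := local_reach hN x₀ hx₀
  refine ⟨min (δ / 2) (1 / (2 * (C + 1))), by positivity, ?_⟩
  intro y hy a a' ha ha'
  have hy1 : ‖y - x₀‖ < δ / 2 := (mem_ball_iff_norm.1 hy).trans_le (min_le_left _ _)
  have hy2 : ‖y - x₀‖ < 1 / (2 * (C + 1)) := (mem_ball_iff_norm.1 hy).trans_le (min_le_right _ _)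
  have near : ∀ c, IsNearestPt N y c → c ∈ ball x₀ δ := by
    intro c hc
    have := hc.2 x₀ hx₀
    rw [mem_ball_iff_norm]
    have e : c - x₀ = (y - x₀) - (y - c) := by abel
    rw [e]
    have := norm_sub_le (y - x₀) (y - c)
    linarith
  have h1 := H a (near a ha) a' (near a' ha') y ha'.1 ha
  have h2 : ‖y - a'‖ = ‖y - a‖ := le_antisymm (ha'.2 a ha.1) (ha.2 a' ha'.1)
  have h3 : ‖(y - a) - (a' - a)‖ ^ 2 = ‖y - a‖ ^ 2 - 2 * inner ℝ (y - a) (a' - a) + ‖a' - a‖ ^ 2 :=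
    norm_sub_sq_real _ _
  have e : (y - a) - (a' - a) = y - a' := by abel
  rw [e, h2] at h3
  have h4 : ‖y - a‖ < 1 / (2 * (C + 1)) := (ha.2 x₀ hx₀).trans_lt hy2
  have h5 : ‖y - a‖ * (2 * (C + 1)) < 1 := by rwa [lt_div_iff₀ (by positivity)] at h4
  by_contra hne
  have h6 : 0 < ‖a' - a‖ := norm_pos_iff.2 (sub_ne_zero.2 hne)
  have h7 : 0 < ‖a' - a‖ ^ 2 := by positivity
  have h8 : ‖a' - a‖ ^ 2 * 1 ≤ ‖a' - a‖ ^ 2 * (2 * C * ‖y - a‖) := by linarith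
  have h9 := le_of_mul_le_mul_left h8 h7
  nlinarith [norm_nonneg (y - a)]

/-- A compact smooth submanifold is a neighbourhood retract. -/
lemma exists_retraction {ν : ℕ} {N : Set (EuclideanSpace ℝ (Fin ν))} (hN : IsSmoothSubmanifold N)
    (hc : IsCompact N) (hne : N.Nonempty) :
    ∃ ε > 0, ∃ r : EuclideanSpace ℝ (Fin ν) → EuclideanSpace ℝ (Fin ν),
      ContinuousOn r (thickening ε N) ∧ (∀ y, r y ∈ N) ∧ ∀ y ∈ N, r y = y := by
  have hex : ∀ y, ∃ a, IsNearestPt N y a := by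
    intro y
    obtain ⟨a, ha, h⟩ := hc.exists_isMinOn hne
      (f := fun z => ‖y - z‖) (by fun_prop)
    exact ⟨a, ha, fun z hz => h hz⟩
  choose r hr using hex
  choose! e he hu using local_unique hN
  set O := ⋃ x ∈ N, ball x (e x) with hO
  have hOo : IsOpen O := isOpen_biUnion fun _ _ => isOpen_ball
  have hNO : N ⊆ O := fun x hx => mem_biUnion hx (mem_ball_self (he x hx))
  obtain ⟨ε, hε, hεO⟩ := hc.exists_thickening_subset_open hOo hNO
  refine ⟨ε, hε, r, ?_, fun y => (hr y).1, ?_⟩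
  · intro y hy
    obtain ⟨x, hx, hyx⟩ := mem_iUnion₂.1 (hεO hy)
    refine ContinuousAt.continuousWithinAt ?_
    refine hc.tendsto_nhds_of_unique_mapClusterPt (Eventually.of_forall fun z => (hr z).1) ?_
    intro z hz hcl
    refine hu x hx y hyx _ _ (hr y) ⟨hz, fun z' hz' => ?_⟩
    refine le_of_forall_pos_le_add fun η hη => ?_
    rw [mapClusterPt_iff_frequently] at hcl
    have f1 := hcl _ (ball_mem_nhds z (show 0 < η / 3 by positivity))
    have f2 : ∀ᶠ q in 𝓝 y, q ∈ ball y (η / 3) := ball_mem_nhds y (by positivity)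
    obtain ⟨q, hq1, hq2⟩ := (f1.and_eventually f2).exists
    rw [mem_ball_iff_norm] at hq1 hq2
    have h1 := (hr q).2 z' hz'
    have e1 : y - z = (q - r q) + (r q - z) - (q - y) := by abel
    have e2 : q - z' = (q - y) + (y - z') := by abel
    have h2 := norm_sub_le ((q - r q) + (r q - z)) (q - y)
    have h3 := norm_add_le (q - r q) (r q - z)
    have h4 := norm_add_le (q - y) (y - z')
    rw [← e1] at h2
    rw [← e2] at h4
    linarith
  · intro y hy
    have := (hr y).2 y hy
    simp only [sub_self, norm_zero] at this
    exact (sub_eq_zero.1 (norm_le_zero_iff.1 this)).symm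

/-- Uniformly close maps are homotopic. -/
lemma exists_close_homotopic {ν : ℕ} {N : Set (EuclideanSpace ℝ (Fin ν))}
    (hN : IsSmoothSubmanifold N) (hc : IsCompact N) (hne : N.Nonempty) (l : ℕ) :
    ∃ ε > 0, ∀ f g : EuclideanSpace ℝ (Fin l) → EuclideanSpace ℝ (Fin ν),
      ContinuousOn f (closedBall 0 1) → ContinuousOn g (closedBall 0 1) →
      MapsTo f (closedBall 0 1) N → MapsTo g (closedBall 0 1) N →
      (∀ x ∈ sphere (0 : EuclideanSpace ℝ (Fin l)) 1, f x = g x) →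
      (∀ x ∈ closedBall (0 : EuclideanSpace ℝ (Fin l)) 1, ‖f x - g x‖ < ε) →
      HomotopicRelSphere N f g := by
  obtain ⟨ε, hε, r, hr, hrN, hrid⟩ := exists_retraction hN hc hne
  refine ⟨ε, hε, fun f g hf hg hfN hgN hfg hclose => ?_⟩
  refine ⟨fun z => r (f z.1 + z.2 • (g z.1 - f z.1)), ?_, fun z _ => hrN _, ?_, ?_⟩
  · have hf' : ContinuousOn (fun z : EuclideanSpace ℝ (Fin l) × ℝ => f z.1)
        (closedBall 0 1 ×ˢ Icc (0 : ℝ) 1) := hf.comp continuousOn_fst fun z hz => hz.1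
    have hg' : ContinuousOn (fun z : EuclideanSpace ℝ (Fin l) × ℝ => g z.1)
        (closedBall 0 1 ×ˢ Icc (0 : ℝ) 1) := hg.comp continuousOn_fst fun z hz => hz.1
    refine hr.comp (hf'.add (continuousOn_snd.smul (hg'.sub hf'))) ?_
    rintro ⟨x, t⟩ ⟨hx, ht⟩
    rw [mem_thickening_iff]
    refine ⟨f x, hfN hx, ?_⟩
    have h1 := hclose x hx
    rw [norm_sub_rev] at h1
    simp only [dist_eq_norm, add_sub_cancel_left, norm_smul, Real.norm_of_nonneg ht.1]
    have := mul_le_mul_of_nonneg_right ht.2 (norm_nonneg (g x - f x))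
    linarith
  · intro x hx
    simp [hrid _ (hfN hx), hrid _ (hgN hx)]
  · intro x hx t ht
    have hx' := sphere_subset_closedBall hx
    simp [← hfg x hx, hrid _ (hfN hx')]

/-- Pointwise weak Jensen/Young inequality. -/
lemma young_pointwise {a D d lam p q : ℝ} (ha : 0 ≤ a) (hD : 0 ≤ D) (hDd : D ≤ d)
    (hlam : 0 < lam) (hp : 1 < p) (hq : 0 < q) (h0 : D = 0 → a = 0) :
    a ≤ lam + lam ^ (1 - p) * d ^ q * (a ^ p / D ^ q) := by
  by_cases hal : a ≤ lam
  · have : 0 ≤ d := hD.trans hDd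
    have : 0 ≤ lam ^ (1 - p) * d ^ q * (a ^ p / D ^ q) := by positivity
    linarith
  · push Not at hal
    have ha0 : 0 < a := hlam.trans hal
    have hD0 : 0 < D := lt_of_le_of_ne hD fun h => ha0.ne' (h0 h.symm)
    have h1 : D ^ q ≤ d ^ q := by gcongr
    have hDq : 0 < D ^ q := by positivity
    have h2 : 1 ≤ d ^ q / D ^ q := by rwa [one_le_div hDq]
    have h3 : a ^ (1 - p) ≤ lam ^ (1 - p) :=
      Real.rpow_le_rpow_of_nonpos hlam hal.le (by linarith)
    have h4 : a ^ (1 - p) * a ^ p = a := by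
      rw [← Real.rpow_add ha0]; simp
    have h5 : a ≤ lam ^ (1 - p) * a ^ p := by
      calc a = a ^ (1 - p) * a ^ p := h4.symm
        _ ≤ _ := by gcongr
    have h6 : a ≤ lam ^ (1 - p) * a ^ p * (d ^ q / D ^ q) := by
      calc a ≤ lam ^ (1 - p) * a ^ p * 1 := by simpa using h5
        _ ≤ _ := by gcongr
    calc a ≤ lam ^ (1 - p) * a ^ p * (d ^ q / D ^ q) := h6
      _ = lam ^ (1 - p) * d ^ q * (a ^ p / D ^ q) := by ring
      _ ≤ _ := by linarith

lemma isProb_cond_ball {l : ℕ} (x : EuclideanSpace ℝ (Fin l)) {t : ℝ} (ht : 0 < t) :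
    IsProbabilityMeasure (ProbabilityTheory.cond volume (ball x t)) :=
  ProbabilityTheory.cond_isProbabilityMeasure_of_finite
    (measure_ball_pos volume x ht).ne' measure_ball_lt_top.ne

/-- Comparison of means over two balls. -/
lemma mean_diff {l ν : ℕ} {s p : ℝ} (hp : 1 < p) (hq : 0 < (l : ℝ) + s * p)
    (u : EuclideanSpace ℝ (Fin l) → EuclideanSpace ℝ (Fin ν)) (hu : Continuous u)
    {R : ℝ} (hR : ∀ x, ‖u x‖ ≤ R)
    {x y : EuclideanSpace ℝ (Fin l)} {t t' d lam : ℝ} (ht : 0 < t) (ht' : 0 < t')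
    (hx : ball x t ⊆ ball 0 1) (hy : ball y t' ⊆ ball 0 1) (hlam : 0 < lam) (hd0 : 0 ≤ d)
    (hd : ∀ a ∈ ball x t, ∀ c ∈ ball y t', ‖c - a‖ ≤ d) {M : ℝ} (hM : 0 ≤ M)
    (hE : gagliardoE s p (ball 0 1) u ≤ ENNReal.ofReal M) :
    dist (∫ z, u z ∂(ProbabilityTheory.cond volume (ball x t)))
      (∫ z, u z ∂(ProbabilityTheory.cond volume (ball y t'))) ≤
      lam + lam ^ (1 - p) * d ^ ((l : ℝ) + s * p) *
        ((t ^ l * volume.real (ball (0 : EuclideanSpace ℝ (Fin l)) 1))⁻¹ *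
         ((t' ^ l * volume.real (ball (0 : EuclideanSpace ℝ (Fin l)) 1))⁻¹ * M)) := by
  have := isProb_cond_ball x ht
  have := isProb_cond_ball y ht'
  set q := (l : ℝ) + s * p with hqdef
  set ω := volume.real (ball (0 : EuclideanSpace ℝ (Fin l)) 1) with hω
  have hω0 : 0 < ω := by
    rw [hω, measureReal_def]
    exact ENNReal.toReal_pos (measure_ball_pos volume _ one_pos).ne' measure_ball_lt_top.ne
  have hvol : ∀ (z : EuclideanSpace ℝ (Fin l)) (r : ℝ), 0 < r →
      volume (ball z r) = ENNReal.ofReal (r ^ l * ω) := by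
    intro z r hr
    rw [Measure.addHaar_ball_of_pos volume z hr, ENNReal.ofReal_mul (by positivity), hω,
      measureReal_def, ENNReal.ofReal_toReal measure_ball_lt_top.ne]
    simp
  set μ := ProbabilityTheory.cond volume (ball x t) with hμ
  set μ' := ProbabilityTheory.cond volume (ball y t') with hμ'
  have hint : ∀ (m : Measure (EuclideanSpace ℝ (Fin l))) [IsFiniteMeasure m], Integrable u m :=
    fun m _ => Integrable.of_bound hu.aestronglyMeasurable R (Eventually.of_forall hR)
  set G : EuclideanSpace ℝ (Fin l) → EuclideanSpace ℝ (Fin l) → ℝ≥0∞ := fun a c =>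
    ENNReal.ofReal (‖u c - u a‖ ^ p / ‖c - a‖ ^ q) with hG
  have hGm : Measurable (fun z : EuclideanSpace ℝ (Fin l) × EuclideanSpace ℝ (Fin l) =>
      G z.1 z.2) := by
    have := hu.measurable
    simp only [hG]
    fun_prop
  set k := lam ^ (1 - p) * d ^ q with hk
  have hk0 : 0 ≤ k := by positivity
  have hae : ∀ᵐ a ∂μ, a ∈ ball x t := ProbabilityTheory.ae_cond_mem measurableSet_ball
  have hae' : ∀ᵐ a ∂μ', a ∈ ball y t' := ProbabilityTheory.ae_cond_mem measurableSet_ball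
  have hdiff : (∫ z, u z ∂μ) - (∫ z, u z ∂μ') = ∫ a, (∫ c, (u a - u c) ∂μ') ∂μ := by
    have : ∀ a, ∫ c, (u a - u c) ∂μ' = u a - ∫ c, u c ∂μ' := by
      intro a
      rw [integral_sub (integrable_const _) (hint μ')]; simp
    simp_rw [this]
    rw [integral_sub (hint μ) (integrable_const _)]; simp
  have hGE : ∫⁻ a, ∫⁻ c, G a c ∂μ' ∂μ ≤
      ENNReal.ofReal ((t ^ l * ω)⁻¹ * ((t' ^ l * ω)⁻¹ * M)) := by
    have h1 : ∀ a, ∫⁻ c, G a c ∂μ' = ENNReal.ofReal (t' ^ l * ω)⁻¹ * ∫⁻ c in ball y t', G a c := by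
      intro a
      rw [hμ', ProbabilityTheory.cond, lintegral_smul_measure, hvol y t' ht', smul_eq_mul,
        ENNReal.ofReal_inv_of_pos (by positivity)]
    simp_rw [h1]
    rw [lintegral_const_mul' _ _ ENNReal.ofReal_ne_top]
    rw [hμ, ProbabilityTheory.cond, lintegral_smul_measure, hvol x t ht, smul_eq_mul,
        ← ENNReal.ofReal_inv_of_pos (by positivity)]
    have h2 : ∫⁻ a in ball x t, ∫⁻ c in ball y t', G a c ≤ ENNReal.ofReal M := by
      refine le_trans ?_ hE
      refine (lintegral_mono_set hx).trans ?_
      exact lintegral_mono fun a => lintegral_mono_set hy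
    rw [ENNReal.ofReal_mul (by positivity), ENNReal.ofReal_mul (by positivity)]
    calc _ ≤ ENNReal.ofReal (t' ^ l * ω)⁻¹ * (ENNReal.ofReal (t ^ l * ω)⁻¹ * ENNReal.ofReal M) := by
          gcongr
      _ = _ := by ring
  have hpt : ∀ a ∈ ball x t, ∀ c ∈ ball y t', ‖u a - u c‖ₑ ≤ ENNReal.ofReal lam +
      ENNReal.ofReal k * G a c := by
    intro a ha c hc
    rw [← ofReal_norm, hG, ← ENNReal.ofReal_mul hk0,
      ← ENNReal.ofReal_add hlam.le (by positivity)]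
    apply ENNReal.ofReal_le_ofReal
    rw [norm_sub_rev]
    refine young_pointwise (norm_nonneg _) (norm_nonneg _) (hd a ha c hc) hlam hp hq ?_
    intro h
    rw [norm_eq_zero, sub_eq_zero] at h
    simp [h]
  have main : ‖(∫ z, u z ∂μ) - (∫ z, u z ∂μ')‖ₑ ≤ ENNReal.ofReal lam + ENNReal.ofReal k *
      ENNReal.ofReal ((t ^ l * ω)⁻¹ * ((t' ^ l * ω)⁻¹ * M)) := by
    rw [hdiff]
    calc ‖∫ a, (∫ c, (u a - u c) ∂μ') ∂μ‖ₑ ≤ ∫⁻ a, ‖∫ c, (u a - u c) ∂μ'‖ₑ ∂μ :=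
          enorm_integral_le_lintegral_enorm _
      _ ≤ ∫⁻ a, ∫⁻ c, ‖u a - u c‖ₑ ∂μ' ∂μ :=
          lintegral_mono fun a => enorm_integral_le_lintegral_enorm _
      _ ≤ ∫⁻ a, (ENNReal.ofReal lam + ENNReal.ofReal k * ∫⁻ c, G a c ∂μ') ∂μ := by
          refine lintegral_mono_ae ?_
          filter_upwards [hae] with a ha
          calc ∫⁻ c, ‖u a - u c‖ₑ ∂μ' ≤ ∫⁻ c, (ENNReal.ofReal lam + ENNReal.ofReal k * G a c) ∂μ' := by
                refine lintegral_mono_ae ?_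
                filter_upwards [hae'] with c hc using hpt a ha c hc
            _ = _ := by
                rw [lintegral_add_left measurable_const,
                  lintegral_const_mul' _ _ ENNReal.ofReal_ne_top]
                simp
      _ = ENNReal.ofReal lam + ENNReal.ofReal k * ∫⁻ a, ∫⁻ c, G a c ∂μ' ∂μ := by
          rw [lintegral_add_left measurable_const,
                  lintegral_const_mul' _ _ ENNReal.ofReal_ne_top]
          simp
      _ ≤ _ := by gcongr
  rw [← ENNReal.ofReal_mul hk0, ← ENNReal.ofReal_add hlam.le (by positivity),
    ← ofReal_norm] at main
  rw [dist_eq_norm]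
  exact (ENNReal.ofReal_le_ofReal_iff (by positivity)).1 main

/-- The shrinking balls used in the Morrey-Campanato argument. -/
def mBall {l : ℕ} (x : EuclideanSpace ℝ (Fin l)) (k : ℕ) : Set (EuclideanSpace ℝ (Fin l)) :=
  ball ((1 - (1 / 2 : ℝ) ^ k) • x) ((1 / 2 : ℝ) ^ k)

lemma mBall_dist {l : ℕ} {x : EuclideanSpace ℝ (Fin l)} (hx : ‖x‖ ≤ 1) (k : ℕ)
    {z : EuclideanSpace ℝ (Fin l)} (hz : z ∈ mBall x k) : ‖z - x‖ ≤ 2 * (1 / 2 : ℝ) ^ k := by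
  rw [mBall, mem_ball_iff_norm] at hz
  set t := (1 / 2 : ℝ) ^ k with ht
  have ht0 : 0 < t := by positivity
  have e : z - x = (z - (1 - t) • x) - t • x := by rw [sub_smul, one_smul]; abel
  rw [e]
  have h1 := norm_sub_le (z - (1 - t) • x) (t • x)
  rw [norm_smul, Real.norm_of_nonneg ht0.le] at h1
  nlinarith

lemma mBall_subset {l : ℕ} {x : EuclideanSpace ℝ (Fin l)} (hx : ‖x‖ ≤ 1) (k : ℕ) :
    mBall x k ⊆ ball 0 1 := by
  intro z hz
  rw [mBall, mem_ball_iff_norm] at hz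
  rw [mem_ball_zero_iff]
  set t := (1 / 2 : ℝ) ^ k with ht
  have ht0 : 0 < t := by positivity
  have ht1 : t ≤ 1 := pow_le_one₀ (by norm_num) (by norm_num)
  have e : z = (z - (1 - t) • x) + (1 - t) • x := by abel
  rw [e]
  have h1 := norm_add_le (z - (1 - t) • x) ((1 - t) • x)
  rw [norm_smul, Real.norm_of_nonneg (by linarith)] at h1
  nlinarith

/-- Fractional Morrey inequality in dyadic form. -/
lemma morrey {l ν : ℕ} {p : ℝ} (hp : (l : ℝ) + 1 < p) {M : ℝ} (hM : 0 ≤ M) :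
    ∃ K r : ℝ, 0 ≤ K ∧ 0 ≤ r ∧ r < 1 ∧
    ∀ u : EuclideanSpace ℝ (Fin l) → EuclideanSpace ℝ (Fin ν), Continuous u →
    (∃ R : ℝ, ∀ x, ‖u x‖ ≤ R) → gagliardoE (1 - 1 / p) p (ball 0 1) u ≤ ENNReal.ofReal M →
    ∀ (k : ℕ) (x y : EuclideanSpace ℝ (Fin l)), ‖x‖ ≤ 1 → ‖y‖ ≤ 1 →
      ‖x - y‖ ≤ (1 / 2 : ℝ) ^ k → dist (u x) (u y) ≤ K * r ^ k := by
  have hl0 : (0 : ℝ) ≤ l := Nat.cast_nonneg l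
  have hp1 : 1 < p := by linarith
  have hp0 : 0 < p := by linarith
  have hqe : (l : ℝ) + (1 - 1 / p) * p = l + p - 1 := by field_simp; ring
  set q := (l : ℝ) + (1 - 1 / p) * p with hq
  have hq0 : 0 < q := by rw [hqe]; linarith
  set β := p - 1 - l with hβ
  have hβ0 : 0 < β := by linarith
  set ω := volume.real (ball (0 : EuclideanSpace ℝ (Fin l)) 1) with hω
  have hω0 : 0 < ω := by
    rw [hω, measureReal_def]
    exact ENNReal.toReal_pos (measure_ball_pos volume _ one_pos).ne' measure_ball_lt_top.ne
  set r := (1 / 2 : ℝ) ^ (β / p) with hr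
  have hr0 : 0 < r := by positivity
  have hr1 : r < 1 := Real.rpow_lt_one (by norm_num) (by norm_num) (by positivity)
  set C := 1 + 5 ^ q * (ω⁻¹ * (2 ^ l * ω⁻¹ * M)) with hC
  have hC0 : 0 ≤ C := by positivity
  have h1r : 0 < 1 - r := by linarith
  refine ⟨2 * (C / (1 - r)) + C, r, by positivity, hr0.le, hr1, ?_⟩
  rintro u hu ⟨R, hR⟩ hE
  set m : EuclideanSpace ℝ (Fin l) → ℕ → EuclideanSpace ℝ (Fin ν) := fun x k =>
    ∫ z, u z ∂(ProbabilityTheory.cond volume (mBall x k)) with hm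
  have step : ∀ (k k' : ℕ) (x y : EuclideanSpace ℝ (Fin l)), ‖x‖ ≤ 1 → ‖y‖ ≤ 1 →
      ‖x - y‖ ≤ (1 / 2 : ℝ) ^ k → k ≤ k' → k' ≤ k + 1 → dist (m x k) (m y k') ≤ C * r ^ k := by
    intro k k' x y hx hy hxy hkk hkk'
    set t := (1 / 2 : ℝ) ^ k with ht
    set t' := (1 / 2 : ℝ) ^ k' with ht'
    have ht0 : 0 < t := by positivity
    have ht0' : 0 < t' := by positivity
    have htt : t' ≤ t := pow_le_pow_of_le_one (by norm_num) (by norm_num) hkk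
    have htt' : t / 2 ≤ t' := by
      have : (1 / 2 : ℝ) ^ (k + 1) ≤ t' := pow_le_pow_of_le_one (by norm_num) (by norm_num) hkk'
      rw [pow_succ] at this
      linarith
    have hrk : r ^ k = t ^ (β / p) := by
      rw [hr, ht, ← Real.rpow_natCast, ← Real.rpow_natCast, ← Real.rpow_mul (by norm_num),
        ← Real.rpow_mul (by norm_num), mul_comm]
    have hd : ∀ a ∈ mBall x k, ∀ c ∈ mBall y k', ‖c - a‖ ≤ 5 * t := by
      intro a ha c hc
      have h1 := mBall_dist hx k ha
      have h2 := mBall_dist hy k' hc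
      have e : c - a = (c - y) - (a - x) - (x - y) := by abel
      rw [e]
      have h3 := norm_sub_le ((c - y) - (a - x)) (x - y)
      have h4 := norm_sub_le (c - y) (a - x)
      linarith
    have hmd := mean_diff hp1 hq0 u hu hR ht0 ht0' (mBall_subset hx k) (mBall_subset hy k')
      (lam := t ^ (β / p)) (by positivity) (by positivity) hd hM hE
    refine hmd.trans ?_
    rw [hrk, hC, ← hω, ← hq]
    have hinv : (t' ^ l)⁻¹ ≤ 2 ^ l * (t ^ l)⁻¹ := by
      have : (t / 2) ^ l ≤ t' ^ l := by gcongr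
      calc (t' ^ l)⁻¹ ≤ ((t / 2) ^ l)⁻¹ := by gcongr
        _ = _ := by rw [div_pow, inv_div, div_eq_mul_inv]
    have hpow : (t ^ (β / p)) ^ (1 - p) * t ^ q * ((t ^ l)⁻¹ * (t ^ l)⁻¹) = t ^ (β / p) := by
      rw [← Real.rpow_natCast t l, ← Real.rpow_neg ht0.le, ← Real.rpow_mul ht0.le,
        ← Real.rpow_add ht0, ← Real.rpow_add ht0, ← Real.rpow_add ht0]
      congr 1
      rw [hqe, hβ]
      field_simp
      ring
    calc t ^ (β / p) + (t ^ (β / p)) ^ (1 - p) * (5 * t) ^ q *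
          ((t ^ l * ω)⁻¹ * ((t' ^ l * ω)⁻¹ * M))
        = t ^ (β / p) + (t ^ (β / p)) ^ (1 - p) * (5 ^ q * t ^ q) *
          ((t ^ l)⁻¹ * ω⁻¹ * ((t' ^ l)⁻¹ * ω⁻¹ * M)) := by
          rw [Real.mul_rpow (by norm_num) ht0.le, mul_inv, mul_inv]
      _ ≤ t ^ (β / p) + (t ^ (β / p)) ^ (1 - p) * (5 ^ q * t ^ q) *
          ((t ^ l)⁻¹ * ω⁻¹ * ((2 ^ l * (t ^ l)⁻¹) * ω⁻¹ * M)) := by gcongr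
      _ = t ^ (β / p) + ((t ^ (β / p)) ^ (1 - p) * t ^ q * ((t ^ l)⁻¹ * (t ^ l)⁻¹)) *
          (5 ^ q * (ω⁻¹ * (2 ^ l * ω⁻¹ * M))) := by ring
      _ = _ := by rw [hpow]; ring
  have hlim : ∀ x : EuclideanSpace ℝ (Fin l), ‖x‖ ≤ 1 → Tendsto (m x) atTop (𝓝 (u x)) := by
    intro x hx
    rw [Metric.tendsto_atTop]
    intro ε hε
    obtain ⟨δ, hδ, hδu⟩ := Metric.continuousAt_iff.1 (hu.continuousAt (x := x)) (ε / 2) (by positivity)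
    obtain ⟨n, hn⟩ := exists_pow_lt_of_lt_one (show 0 < δ / 2 by positivity)
      (show (1 / 2 : ℝ) < 1 by norm_num)
    refine ⟨n, fun k hk => ?_⟩
    have hk2 : (1 / 2 : ℝ) ^ k ≤ (1 / 2 : ℝ) ^ n :=
      pow_le_pow_of_le_one (by norm_num) (by norm_num) hk
    have : IsProbabilityMeasure (ProbabilityTheory.cond volume (mBall x k)) :=
      isProb_cond_ball _ (by positivity)
    have hint : Integrable u (ProbabilityTheory.cond volume (mBall x k)) :=
      Integrable.of_bound hu.aestronglyMeasurable R (Eventually.of_forall hR)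
    have e : m x k - u x = ∫ z, (u z - u x) ∂(ProbabilityTheory.cond volume (mBall x k)) := by
      rw [integral_sub hint (integrable_const _)]; simp [hm]
    have hae : ∀ᵐ a ∂(ProbabilityTheory.cond volume (mBall x k)), a ∈ mBall x k :=
      ProbabilityTheory.ae_cond_mem measurableSet_ball
    have hb : ‖∫ z, (u z - u x) ∂(ProbabilityTheory.cond volume (mBall x k))‖ ≤ ε / 2 := by
      have := norm_integral_le_of_norm_le_const (μ := ProbabilityTheory.cond volume (mBall x k))
        (f := fun z => u z - u x) (C := ε / 2) (by
          filter_upwards [hae] with z hz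
          have h1 := mBall_dist hx k hz
          have h2 : dist z x < δ := by rw [dist_eq_norm]; linarith
          have := hδu h2
          rw [dist_eq_norm] at this
          exact this.le)
      simpa using this
    rw [dist_eq_norm, e]
    linarith
  intro k x y hx hy hxy
  have a1 := dist_le_of_le_geometric_of_tendsto r C hr1
    (fun n => step n (n + 1) x x hx hx (by simp) (by omega) le_rfl) (hlim x hx) k
  have a2 := dist_le_of_le_geometric_of_tendsto r C hr1
    (fun n => step n (n + 1) y y hy hy (by simp) (by omega) le_rfl) (hlim y hy) k
  have a3 := step k k x y hx hy hxy le_rfl (by omega)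
  have a4 := dist_triangle4 (u x) (m x k) (m y k) (u y)
  rw [dist_comm] at a1
  calc dist (u x) (u y) ≤ C * r ^ k / (1 - r) + C * r ^ k + C * r ^ k / (1 - r) := by linarith
    _ = _ := by ring

/-- if `p > ℓ + 1` and `(w_j)` are continuous maps `B̄^ℓ → N`, equal to `b` on
`S^{ℓ-1}` and pairwise non-homotopic relative to `S^{ℓ-1}`, then their `W^{1-1/p,p}` Gagliardo
energies tend to `∞`. -/
theorem statement8 (ν : ℕ) (hν : 1 ≤ ν) (N : Set (EuclideanSpace ℝ (Fin ν)))
    (hNcpt : IsCompact N) (hNconn : IsConnected N) (hNsub : IsSmoothSubmanifold N)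
    (b : EuclideanSpace ℝ (Fin ν)) (hb : b ∈ N)
    (l : ℕ) (hl : 1 ≤ l) (p : ℝ) (hp : (l : ℝ) + 1 < p)
    (w : ℕ → EuclideanSpace ℝ (Fin l) → EuclideanSpace ℝ (Fin ν))
    (hwc : ∀ j, ContinuousOn (w j) (closedBall 0 1))
    (hwN : ∀ j, MapsTo (w j) (closedBall 0 1) N)
    (hwb : ∀ j, ∀ x ∈ sphere (0 : EuclideanSpace ℝ (Fin l)) 1, w j x = b)
    (hpairwise : ∀ j k : ℕ, j ≠ k → ¬ HomotopicRelSphere N (w j) (w k)) :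
    ∀ M : ℝ, 0 < M → ∃ J : ℕ, ∀ j, J ≤ j →
      ENNReal.ofReal M ≤ gagliardoE (1 - 1 / p) p (ball 0 1) (w j) := by
  intro M hM
  by_contra hcon
  push Not at hcon
  have hfreq : ∃ᶠ j in atTop, gagliardoE (1 - 1 / p) p (ball 0 1) (w j) < ENNReal.ofReal M := by
    rw [frequently_atTop]
    exact hcon
  obtain ⟨σ, hσ, hσE⟩ := extraction_of_frequently_atTop hfreq
  obtain ⟨ε, hε, hclose⟩ := exists_close_homotopic hNsub hNcpt ⟨b, hb⟩ l
  obtain ⟨K, r, hK, hr0, hr1, hmor⟩ := morrey (l := l) (ν := ν) hp hM.le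
  obtain ⟨R, hR⟩ := hNcpt.isBounded.exists_norm_le
  obtain ⟨k, hk⟩ : ∃ k : ℕ, K * r ^ k < ε / 3 := by
    have : Tendsto (fun k : ℕ => K * r ^ k) atTop (𝓝 (K * 0)) :=
      (tendsto_pow_atTop_nhds_zero_of_lt_one hr0 hr1).const_mul K
    rw [mul_zero] at this
    exact (this.eventually (gt_mem_nhds (show 0 < ε / 3 by positivity))).exists
  have hequi : ∀ n, ∀ x y : EuclideanSpace ℝ (Fin l), ‖x‖ ≤ 1 → ‖y‖ ≤ 1 →
      ‖x - y‖ ≤ (1 / 2 : ℝ) ^ k → dist (w (σ n) x) (w (σ n) y) < ε / 3 := by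
    intro n x y hx hy hxy
    refine lt_of_le_of_lt ?_ hk
    set P : EuclideanSpace ℝ (Fin l) → EuclideanSpace ℝ (Fin l) :=
      fun x => (max 1 ‖x‖)⁻¹ • x with hP
    have hPc : Continuous P := by
      refine Continuous.smul (Continuous.inv₀ (continuous_const.max continuous_norm) fun x => ?_)
        continuous_id
      exact (lt_of_lt_of_le one_pos (le_max_left _ _)).ne'
    have hPm : ∀ x, P x ∈ closedBall (0 : EuclideanSpace ℝ (Fin l)) 1 := by
      intro x
      have h0 : 0 < max 1 ‖x‖ := lt_of_lt_of_le one_pos (le_max_left _ _)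
      rw [mem_closedBall_zero_iff, hP, norm_smul, norm_inv, Real.norm_of_nonneg h0.le,
        inv_mul_le_iff₀ h0, mul_one]
      exact le_max_right _ _
    have hPid : ∀ x, ‖x‖ ≤ 1 → P x = x := by
      intro x hx
      simp [hP, max_eq_left hx]
    have hE : gagliardoE (1 - 1 / p) p (ball 0 1) (fun x => w (σ n) (P x)) ≤
        ENNReal.ofReal M := by
      refine le_trans (le_of_eq ?_) (hσE n).le
      unfold gagliardoE
      refine setLIntegral_congr_fun measurableSet_ball fun x hx => ?_
      refine setLIntegral_congr_fun measurableSet_ball fun y hy => ?_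
      simp only [hPid x (mem_ball_zero_iff.1 hx).le, hPid y (mem_ball_zero_iff.1 hy).le]
    have := hmor (fun x => w (σ n) (P x)) ((hwc (σ n)).comp_continuous hPc hPm)
      ⟨R, fun x => hR _ (hwN _ (hPm x))⟩ hE k x y hx hy hxy
    simpa only [hPid x hx, hPid y hy] using this
  obtain ⟨T, hT1, hT, hTc⟩ := (isCompact_closedBall (0 : EuclideanSpace ℝ (Fin l)) 1).finite_cover_balls
    (show (0 : ℝ) < (1 / 2 : ℝ) ^ k by positivity)
  have hTf : Fintype T := hT.fintype
  have hcomp : IsCompact (Set.pi univ fun _ : T => N) := isCompact_univ_pi fun _ => hNcpt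
  obtain ⟨g, -, τ, hτ, hlim⟩ := hcomp.tendsto_subseq
    (x := fun n (i : T) => w (σ n) i) (fun n i _ => hwN _ (hT1 i.2))
  have hcau := hlim.cauchySeq
  obtain ⟨n, hn⟩ := Metric.cauchySeq_iff.1 hcau (ε / 3) (by positivity)
  have hd := hn n le_rfl (n + 1) (by omega)
  have hne : σ (τ n) ≠ σ (τ (n + 1)) := by
    intro h
    have := hτ.injective (hσ.injective h)
    omega
  refine hpairwise _ _ hne (hclose _ _ (hwc _) (hwc _) (hwN _) (hwN _) ?_ ?_)
  · intro x hx
    rw [hwb _ x hx, hwb _ x hx]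
  · intro x hx
    obtain ⟨c, hc, hxc⟩ := mem_iUnion₂.1 (hTc hx)
    have hx' := mem_closedBall_zero_iff.1 hx
    have hc' := mem_closedBall_zero_iff.1 (hT1 hc)
    have h1 : ‖x - c‖ ≤ (1 / 2 : ℝ) ^ k := (mem_ball_iff_norm.1 hxc).le
    have h2 := hequi (τ n) x c hx' hc' h1
    have h3 := hequi (τ (n + 1)) x c hx' hc' h1
    have h4 : dist (w (σ (τ n)) c) (w (σ (τ (n + 1))) c) < ε / 3 :=
      (dist_le_pi_dist _ _ (⟨c, hc⟩ : T)).trans_lt hd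
    have h5 := dist_triangle4 (w (σ (τ n)) x) (w (σ (τ n)) c) (w (σ (τ (n + 1))) c)
      (w (σ (τ (n + 1))) x)
    rw [dist_comm] at h3
    rw [← dist_eq_norm]
    linarith

end
end

section
/- Let ℓ ≥ 1, ν ≥ 1 and 1 < p < ∞. There exists a constant C > 0, depending only on ℓ, p and ν, such that for every C^1 map u : B̄^ℓ → ℝ^ν one has ∬_{B^ℓ×B^ℓ} |u(y) − u(x)|^p / |y − x|^{ℓ + p − 1} dy dx ≤ C · ( ∫_{B^ℓ} ‖Du(x)‖^p dx )^{(p−1)/p} · sup_{x ∈ B̄^ℓ} |u(x)|. -/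
open Metric Set MeasureTheory
open scoped ENNReal

noncomputable section

namespace GN

abbrev EE (l : ℕ) := EuclideanSpace ℝ (Fin l)

/-- Jensen's inequality on the unit interval. -/
lemma jensen (p : ℝ) (hp : 1 < p) (g : ℝ → ℝ≥0∞) (hg : Measurable g) :
    (∫⁻ t in Icc (0 : ℝ) 1, g t) ^ p ≤ ∫⁻ t in Icc (0 : ℝ) 1, g t ^ p := by
  have hc : p.HolderConjugate (Real.conjExponent p) := Real.HolderConjugate.conjExponent hp
  have h := ENNReal.lintegral_mul_le_Lp_mul_Lq (volume.restrict (Icc (0 : ℝ) 1)) hc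
    hg.aemeasurable (g := fun _ => 1) aemeasurable_const
  simp only [Pi.mul_apply, mul_one, ENNReal.one_rpow, lintegral_const, Measure.restrict_apply_univ,
    Real.volume_Icc, sub_zero, ENNReal.ofReal_one, one_mul] at h
  have hp0 : 0 < p := by linarith
  calc (∫⁻ t in Icc (0 : ℝ) 1, g t) ^ p
      ≤ ((∫⁻ t in Icc (0 : ℝ) 1, g t ^ p) ^ (1 / p)) ^ p := ENNReal.rpow_le_rpow h hp0.le
    _ = _ := by rw [← ENNReal.rpow_mul, one_div, inv_mul_cancel₀ hp0.ne', ENNReal.rpow_one]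

lemma scaling {l : ℕ} (F G : EE l → ℝ≥0∞) (hF : Measurable F) (hG : Measurable G)
    (δ q : ℝ) (hδ : 0 < δ)
    (h : ∀ x, F (δ • x) = ENNReal.ofReal (δ ^ q) * G x) :
    ∫⁻ x, F x = ENNReal.ofReal (δ ^ ((l : ℝ) + q)) * ∫⁻ x, G x := by
  have h1 : ∫⁻ x, F (δ • x) = ENNReal.ofReal ((δ ^ l)⁻¹) * ∫⁻ x, F x := by
    rw [← lintegral_map (f := F) hF (measurable_const_smul δ),
      Measure.map_addHaar_smul _ hδ.ne', lintegral_smul_measure]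
    simp [abs_of_pos hδ]
  simp_rw [h] at h1
  rw [lintegral_const_mul _ hG] at h1
  rw [Real.rpow_add hδ, Real.rpow_natCast, ENNReal.ofReal_mul (by positivity), mul_assoc, h1,
    ← mul_assoc, ← ENNReal.ofReal_mul (by positivity), mul_inv_cancel₀ (by positivity)]
  simp

def W (l : ℕ) (δ : ℝ) : EE l → ℝ≥0∞ :=
  (ball 0 δ).indicator fun h => ENNReal.ofReal (‖h‖ ^ (1 - (l : ℝ)))

def Z (l : ℕ) (p δ : ℝ) : EE l → ℝ≥0∞ :=
  (ball 0 δ)ᶜ.indicator fun h => ENNReal.ofReal (‖h‖ ^ (-((l : ℝ) + p - 1)))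

lemma measurable_W (l : ℕ) (δ : ℝ) : Measurable (W l δ) := by
  unfold W
  exact Measurable.indicator (by fun_prop) measurableSet_ball

lemma measurable_Z (l : ℕ) (p δ : ℝ) : Measurable (Z l p δ) := by
  unfold Z
  exact Measurable.indicator (by fun_prop) measurableSet_ball.compl

lemma int_W (l : ℕ) (δ : ℝ) (hδ : 0 < δ) :
    ∫⁻ h, W l δ h = ENNReal.ofReal δ * ∫⁻ h, W l 1 h := by
  rw [scaling (W l δ) (W l 1) (measurable_W _ _) (measurable_W _ _) δ (1 - l) hδ]
  · simp
  · intro x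
    have h1 : δ • x ∈ ball (0 : EE l) δ ↔ x ∈ ball (0 : EE l) 1 := by
      simp [norm_smul, abs_of_pos hδ, hδ]
    unfold W
    by_cases hx : x ∈ ball (0 : EE l) 1
    · rw [indicator_of_mem hx, indicator_of_mem (h1.2 hx), norm_smul, Real.norm_of_nonneg hδ.le,
        Real.mul_rpow hδ.le (norm_nonneg _), ENNReal.ofReal_mul (by positivity)]
    · rw [indicator_of_notMem hx, indicator_of_notMem (fun h => hx (h1.1 h)), mul_zero]

lemma int_Z (l : ℕ) (p δ : ℝ) (hδ : 0 < δ) :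
    ∫⁻ h, Z l p δ h = ENNReal.ofReal (δ ^ (1 - p)) * ∫⁻ h, Z l p 1 h := by
  rw [scaling (Z l p δ) (Z l p 1) (measurable_Z _ _ _) (measurable_Z _ _ _) δ
    (-((l : ℝ) + p - 1)) hδ]
  · congr 3; ring
  · intro x
    have h1 : δ • x ∈ (ball (0 : EE l) δ)ᶜ ↔ x ∈ (ball (0 : EE l) 1)ᶜ := by
      simp [norm_smul, abs_of_pos hδ, hδ]
    unfold Z
    by_cases hx : x ∈ (ball (0 : EE l) 1)ᶜ
    · rw [indicator_of_mem hx, indicator_of_mem (h1.2 hx), norm_smul, Real.norm_of_nonneg hδ.le,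
        Real.mul_rpow hδ.le (norm_nonneg _), ENNReal.ofReal_mul (by positivity)]
    · rw [indicator_of_notMem hx, indicator_of_notMem (fun h => hx (h1.1 h)), mul_zero]

lemma W_fin (l : ℕ) (hl : 1 ≤ l) : ∫⁻ h, W l 1 h ≠ ∞ := by
  have : Nonempty (Fin l) := ⟨⟨0, hl⟩⟩
  unfold W
  rw [lintegral_indicator measurableSet_ball]
  have hi : IntegrableOn (fun h : EE l => ‖h‖ ^ (1 - (l : ℝ))) (ball 0 1) := by
    rw [integrableOn_fun_norm_addHaar (E := EE l) (f := fun r : ℝ => r ^ (1 - (l : ℝ))) volume]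
    have : IntegrableOn (fun _ : ℝ => (1 : ℝ)) (Ioo 0 1) := by simp
    refine this.congr_fun ?_ measurableSet_Ioo
    intro y hy
    have hy0 : (0 : ℝ) < y := hy.1
    simp only [finrank_euclideanSpace, Fintype.card_fin, smul_eq_mul]
    rw [← Real.rpow_natCast, ← Real.rpow_add hy0]
    push_cast [hl]
    simp
  have := hi.lintegral_lt_top
  exact this.ne

lemma Z_fin (l : ℕ) (p : ℝ) (hp : 1 < p) : ∫⁻ h, Z l p 1 h ≠ ∞ := by
  set a : ℝ := (l : ℝ) + p - 1 with ha
  have hfin := finite_integral_one_add_norm (E := EE l) (μ := volume) (r := a)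
    (by simp [ha]; linarith)
  have ha0 : 0 < a := by have : (0 : ℝ) ≤ l := Nat.cast_nonneg l; linarith
  have hle : ∫⁻ h, Z l p 1 h ≤
      ∫⁻ h : EE l, ENNReal.ofReal (2 ^ a) * ENNReal.ofReal ((1 + ‖h‖) ^ (-a)) := by
    refine lintegral_mono fun h => ?_
    unfold Z
    by_cases hx : h ∈ (ball (0 : EE l) 1)ᶜ
    · rw [indicator_of_mem hx, ← ENNReal.ofReal_mul (by positivity)]
      apply ENNReal.ofReal_le_ofReal
      have h1 : 1 ≤ ‖h‖ := by simpa using hx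
      rw [← ha]
      have h2 : (2 : ℝ) ^ a = (2⁻¹ : ℝ) ^ (-a) := by
        rw [Real.rpow_neg (by norm_num), Real.inv_rpow (by norm_num), inv_inv]
      rw [h2, ← Real.mul_rpow (by norm_num) (by positivity)]
      exact Real.rpow_le_rpow_of_nonpos (by positivity) (by linarith) (by linarith)
    · rw [indicator_of_notMem hx]; exact zero_le
  rw [lintegral_const_mul _ (by fun_prop)] at hle
  exact (hle.trans_lt (ENNReal.mul_lt_top ENNReal.ofReal_lt_top hfin)).ne

def G {l ν : ℕ} (p : ℝ) (u : EE l → EE ν) : EE l → ℝ≥0∞ :=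
  (ball 0 1).indicator fun x => ENNReal.ofReal (‖fderiv ℝ u x‖ ^ p)

lemma measurable_G {l ν : ℕ} (p : ℝ) (u : EE l → EE ν) : Measurable (G p u) := by
  unfold G
  refine Measurable.indicator ?_ measurableSet_ball
  have := (measurable_fderiv ℝ u).norm
  exact (this.pow_const p).ennreal_ofReal

lemma segment_bound {l ν : ℕ} (p : ℝ) (hp : 1 < p) (u : EE l → EE ν) (V : Set (EE l))
    (hV : IsOpen V) (hBV : closedBall 0 1 ⊆ V) (hu : ContDiffOn ℝ 1 u V) (x y : EE l)
    (hx : x ∈ ball (0 : EE l) 1) (hy : y ∈ ball (0 : EE l) 1) :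
    ENNReal.ofReal (‖u y - u x‖ ^ p) ≤
      ENNReal.ofReal (‖y - x‖ ^ p) * ∫⁻ t in Icc (0 : ℝ) 1, G p u (x + t • (y - x)) := by
  have hp0 : 0 < p := by linarith
  have hmem : ∀ t ∈ Icc (0 : ℝ) 1, x + t • (y - x) ∈ ball (0 : EE l) 1 := fun t ht =>
    (convex_ball (0 : EE l) 1).add_smul_sub_mem hx hy ht
  have hc : ContDiffOn ℝ 1 (fun t : ℝ => u (x + t • (y - x))) (Icc 0 1) := by
    refine hu.comp (f := fun t : ℝ => x + t • (y - x)) ?_ ?_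
    · exact ContDiff.contDiffOn (by fun_prop)
    · exact fun t ht => hBV (ball_subset_closedBall (hmem t ht))
  have h := enorm_sub_le_lintegral_deriv_of_contDiffOn_Icc hc zero_le_one
  simp only [one_smul, zero_smul, add_zero, add_sub_cancel] at h
  have hd : ∀ t ∈ Icc (0 : ℝ) 1, ‖deriv (fun t : ℝ => u (x + t • (y - x))) t‖ₑ ≤
      ‖fderiv ℝ u (x + t • (y - x))‖ₑ * ‖y - x‖ₑ := by
    intro t ht
    have hdiff : DifferentiableAt ℝ u (x + t • (y - x)) :=
      (hu.contDiffAt (hV.mem_nhds (hBV (ball_subset_closedBall (hmem t ht))))).differentiableAt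
        one_ne_zero
    have h1 : HasDerivAt (fun t : ℝ => x + t • (y - x)) (y - x) t := by
      simpa using ((hasDerivAt_id t).smul_const (y - x)).const_add x
    have h2 := hdiff.hasFDerivAt.comp_hasDerivAt t h1
    have h3 : deriv (fun t : ℝ => u (x + t • (y - x))) t
      = fderiv ℝ u (x + t • (y - x)) (y - x) := h2.deriv
    rw [h3]
    exact ContinuousLinearMap.le_opENorm _ _
  have hm : Measurable fun t : ℝ => ‖fderiv ℝ u (x + t • (y - x))‖ₑ :=
    ((measurable_fderiv ℝ u).comp (by fun_prop : Measurable fun t : ℝ => x + t • (y - x))).enorm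
  have h' : ‖u y - u x‖ₑ ≤
      (∫⁻ t in Icc (0 : ℝ) 1, ‖fderiv ℝ u (x + t • (y - x))‖ₑ) * ‖y - x‖ₑ := by
    rw [← lintegral_mul_const _ hm]
    exact h.trans (setLIntegral_mono' measurableSet_Icc hd)
  have e1 : ∀ a : ℝ, 0 ≤ a → ENNReal.ofReal (a ^ p) = (ENNReal.ofReal a) ^ p := fun a ha =>
    (ENNReal.ofReal_rpow_of_nonneg ha hp0.le).symm
  rw [e1 _ (norm_nonneg _), e1 _ (norm_nonneg _), ofReal_norm, ofReal_norm, mul_comm]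
  refine (ENNReal.rpow_le_rpow h' hp0.le).trans ?_
  rw [ENNReal.mul_rpow_of_nonneg _ _ hp0.le]
  gcongr
  refine (jensen p hp _ hm).trans ?_
  refine setLIntegral_mono' measurableSet_Icc fun t ht => ?_
  unfold G
  rw [indicator_of_mem (hmem t ht), e1 _ (norm_nonneg _), ofReal_norm]

lemma near_bound {l ν : ℕ} (p : ℝ) (u : EE l → EE ν) (δ : ℝ) :
    ∫⁻ x in ball (0 : EE l) 1, ∫⁻ y in ball (0 : EE l) 1,
      W l δ (y - x) * ∫⁻ t in Icc (0 : ℝ) 1, G p u (x + t • (y - x)) ≤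
    (∫⁻ h, W l δ h) * ∫⁻ x in ball (0 : EE l) 1, ENNReal.ofReal (‖fderiv ℝ u x‖ ^ p) := by
  have hG := measurable_G p u
  have hW := measurable_W l δ
  have hGE : ∫⁻ x, G p u x =
      ∫⁻ x in ball (0 : EE l) 1, ENNReal.ofReal (‖fderiv ℝ u x‖ ^ p) := by
    unfold G
    rw [lintegral_indicator measurableSet_ball]
  have hm : Measurable fun z : EE l × EE l =>
      W l δ z.2 * ∫⁻ t in Icc (0 : ℝ) 1, G p u (z.1 + t • z.2) := by
    refine (hW.comp measurable_snd).mul ?_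
    refine Measurable.lintegral_prod_right' (f := fun w : (EE l × EE l) × ℝ =>
      G p u (w.1.1 + w.2 • w.1.2)) ?_
    exact hG.comp (by fun_prop)
  calc _ ≤ ∫⁻ x, ∫⁻ y, W l δ (y - x) * ∫⁻ t in Icc (0 : ℝ) 1, G p u (x + t • (y - x)) := by
        refine (lintegral_mono fun x => setLIntegral_le_lintegral _ _).trans
          (setLIntegral_le_lintegral _ _)
    _ = ∫⁻ x, ∫⁻ h, W l δ h * ∫⁻ t in Icc (0 : ℝ) 1, G p u (x + t • h) := by
        refine lintegral_congr fun x => ?_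
        exact lintegral_sub_right_eq_self
          (fun h => W l δ h * ∫⁻ t in Icc (0 : ℝ) 1, G p u (x + t • h)) x
    _ = ∫⁻ h, ∫⁻ x, W l δ h * ∫⁻ t in Icc (0 : ℝ) 1, G p u (x + t • h) :=
        lintegral_lintegral_swap hm.aemeasurable
    _ = ∫⁻ h, W l δ h * ∫⁻ x, G p u x := by
        refine lintegral_congr fun h => ?_
        have hm2 : Measurable fun w : EE l × ℝ => G p u (w.1 + w.2 • h) :=
          hG.comp (by fun_prop)
        rw [lintegral_const_mul _ (Measurable.lintegral_prod_right' hm2)]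
        rw [lintegral_lintegral_swap hm2.aemeasurable]
        simp_rw [lintegral_add_right_eq_self (G p u)]
        simp
    _ = _ := by rw [lintegral_mul_const _ hW, hGE]

lemma far_bound (l : ℕ) (p δ : ℝ) (c : ℝ≥0∞) :
    ∫⁻ x in ball (0 : EE l) 1, ∫⁻ y in ball (0 : EE l) 1, c * Z l p δ (y - x) ≤
      volume (ball (0 : EE l) 1) * c * ∫⁻ h, Z l p δ h := by
  have hZ := measurable_Z l p δ
  calc _ ≤ ∫⁻ x in ball (0 : EE l) 1, c * ∫⁻ h, Z l p δ h := by
        refine lintegral_mono fun x => ?_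
        refine (setLIntegral_le_lintegral _ _).trans ?_
        have hm : Measurable fun y : EE l => Z l p δ (y - x) := hZ.comp (by fun_prop)
        rw [lintegral_const_mul _ hm, lintegral_sub_right_eq_self (Z l p δ)]
    _ = _ := by rw [setLIntegral_const]; ring

lemma pw_near {l ν : ℕ} (p : ℝ) (hp : 1 < p) (u : EE l → EE ν) (V : Set (EE l))
    (hV : IsOpen V) (hBV : closedBall 0 1 ⊆ V) (hu : ContDiffOn ℝ 1 u V) (x y : EE l)
    (hx : x ∈ ball (0 : EE l) 1) (hy : y ∈ ball (0 : EE l) 1) (δ : ℝ) (hd : ‖y - x‖ < δ) :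
    ENNReal.ofReal (‖u y - u x‖ ^ p / ‖y - x‖ ^ ((l : ℝ) + p - 1)) ≤
      W l δ (y - x) * ∫⁻ t in Icc (0 : ℝ) 1, G p u (x + t • (y - x)) := by
  have hp0 : 0 < p := by linarith
  by_cases hxy : y = x
  · subst hxy
    simp [Real.zero_rpow hp0.ne']
  have hn : 0 < ‖y - x‖ := norm_pos_iff.2 (sub_ne_zero.2 hxy)
  unfold W
  rw [indicator_of_mem (by simpa using hd), div_eq_inv_mul, ENNReal.ofReal_mul (by positivity)]
  refine (mul_le_mul_right (segment_bound p hp u V hV hBV hu x y hx hy) _).trans ?_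
  rw [← mul_assoc, ← ENNReal.ofReal_mul (by positivity), ← Real.rpow_neg hn.le,
    ← Real.rpow_add hn]
  apply le_of_eq
  congr 3
  ring

end GN

open GN in
/-- fractional Gagliardo–Nirenberg inequality on the unit ball:
`E^{1-1/p,p}(u) ≤ C (∫_{B^ℓ} ‖Du‖^p)^{(p-1)/p} ‖u‖_∞` for `C^1` maps `u : B̄^ℓ → ℝ^ν`. -/
theorem statement9 (l ν : ℕ) (hl : 1 ≤ l) (hν : 1 ≤ ν) (p : ℝ) (hp : 1 < p) :
    ∃ C : ℝ, 0 < C ∧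
      ∀ u : EuclideanSpace ℝ (Fin l) → EuclideanSpace ℝ (Fin ν),
        (∃ V : Set (EuclideanSpace ℝ (Fin l)), IsOpen V ∧
          closedBall (0 : EuclideanSpace ℝ (Fin l)) 1 ⊆ V ∧ ContDiffOn ℝ 1 u V) →
        (∫⁻ x in ball (0 : EuclideanSpace ℝ (Fin l)) 1, ∫⁻ y in ball (0 : EuclideanSpace ℝ (Fin l)) 1,
            ENNReal.ofReal (‖u y - u x‖ ^ p / ‖y - x‖ ^ ((l : ℝ) + p - 1)))
          ≤ ENNReal.ofReal C
            * (∫⁻ x in ball (0 : EuclideanSpace ℝ (Fin l)) 1,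
                ENNReal.ofReal (‖fderiv ℝ u x‖ ^ p)) ^ ((p - 1) / p)
            * ENNReal.ofReal (⨆ x : (closedBall (0 : EuclideanSpace ℝ (Fin l)) 1 : Set _), ‖u x‖) := by
  have hp0 : 0 < p := by linarith
  obtain ⟨k1, hk1⟩ : ∃ k : NNReal, (k : ℝ≥0∞) = ∫⁻ h, W l 1 h :=
    ⟨_, ENNReal.coe_toNNReal (W_fin l hl)⟩
  obtain ⟨k2, hk2⟩ : ∃ k : NNReal, (k : ℝ≥0∞) = ∫⁻ h, Z l p 1 h :=
    ⟨_, ENNReal.coe_toNNReal (Z_fin l p hp)⟩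
  obtain ⟨b, hb⟩ : ∃ k : NNReal, (k : ℝ≥0∞) = volume (ball (0 : EE l) 1) :=
    ⟨_, ENNReal.coe_toNNReal measure_ball_lt_top.ne⟩
  refine ⟨k1 + b * 2 ^ p * k2 + 1, by positivity, ?_⟩
  rintro u ⟨V, hV, hBV, hu⟩
  set S : ℝ := ⨆ x : (closedBall (0 : EuclideanSpace ℝ (Fin l)) 1 : Set _), ‖u x‖ with hS
  set E : ℝ≥0∞ := ∫⁻ x in ball (0 : EuclideanSpace ℝ (Fin l)) 1,
                ENNReal.ofReal (‖fderiv ℝ u x‖ ^ p) with hE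
  have hbdd : BddAbove (range fun x : (closedBall (0 : EE l) 1 : Set _) => ‖u x‖) := by
    have hcomp : IsCompact (closedBall (0 : EE l) 1) := isCompact_closedBall _ _
    have := hcomp.bddAbove_image (hu.continuousOn.mono hBV).norm
    rwa [image_eq_range] at this
  have hSb : ∀ x ∈ ball (0 : EE l) 1, ‖u x‖ ≤ S := fun x hx =>
    le_ciSup hbdd (⟨x, ball_subset_closedBall hx⟩ : (closedBall (0 : EE l) 1 : Set _))
  have hS0 : 0 ≤ S := (norm_nonneg _).trans (hSb 0 (by simp))
  have hdiff : ∀ x ∈ ball (0 : EE l) 1, ∀ y ∈ ball (0 : EE l) 1, ‖u y - u x‖ ≤ 2 * S :=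
    fun x hx y hy => (norm_sub_le _ _).trans (by linarith [hSb x hx, hSb y hy])
  rcases hS0.eq_or_lt with hS1 | hS1
  · -- the trivial case `S = 0`
    refine le_trans (le_of_eq ?_) zero_le
    rw [setLIntegral_congr_fun (g := fun _ => 0) measurableSet_ball]
    · simp
    intro x hx
    dsimp only
    rw [setLIntegral_congr_fun (g := fun _ => 0) measurableSet_ball]
    · simp
    intro y hy
    have h0 : ‖u y - u x‖ = 0 :=
      le_antisymm (by simpa [← hS1] using hdiff x hx y hy) (norm_nonneg _)
    simp only [h0, Real.zero_rpow hp0.ne', zero_div, ENNReal.ofReal_zero]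
  by_cases hEt : E = ∞
  · rw [hEt, ENNReal.top_rpow_of_pos (div_pos (by linarith) hp0), ENNReal.mul_top, ENNReal.top_mul]
    · exact le_top
    · simpa using hS1
    · simp only [ne_eq, ENNReal.ofReal_eq_zero, not_le]; positivity
  by_cases hE0 : E = 0
  · refine le_trans ?_ zero_le
    calc _ ≤ ∫⁻ x in ball (0 : EE l) 1, ∫⁻ y in ball (0 : EE l) 1,
            W l 2 (y - x) * ∫⁻ t in Icc (0 : ℝ) 1, G p u (x + t • (y - x)) := by
          refine setLIntegral_mono' measurableSet_ball fun x hx => ?_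
          refine setLIntegral_mono' measurableSet_ball fun y hy => ?_
          refine pw_near p hp u V hV hBV hu x y hx hy 2 ?_
          have h1 : ‖x‖ < 1 := by simpa using hx
          have h2 : ‖y‖ < 1 := by simpa using hy
          linarith [norm_sub_le y x]
      _ ≤ _ := near_bound p u 2
      _ = 0 := by rw [← hE, hE0, mul_zero]
  -- main case
  have hEpos : 0 < E.toReal := ENNReal.toReal_pos hE0 hEt
  set e : ℝ := E.toReal with he
  have hEe : E = ENNReal.ofReal e := (ENNReal.ofReal_toReal hEt).symm
  set A : ℝ := e ^ (1 / p) with hA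
  have hApos : 0 < A := by positivity
  have hAp : e = A ^ p := by
    rw [hA, ← Real.rpow_mul hEpos.le, one_div, inv_mul_cancel₀ hp0.ne', Real.rpow_one]
  have hδ : 0 < S / A := by positivity
  set δ : ℝ := S / A with hδdef
  have hsplit : (∫⁻ x in ball (0 : EE l) 1, ∫⁻ y in ball (0 : EE l) 1,
      ENNReal.ofReal (‖u y - u x‖ ^ p / ‖y - x‖ ^ ((l : ℝ) + p - 1))) ≤
      (∫⁻ h, W l δ h) * E +
        volume (ball (0 : EE l) 1) * ENNReal.ofReal ((2 * S) ^ p) * ∫⁻ h, Z l p δ h := by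
    refine le_trans ?_ (add_le_add (near_bound p u δ) (far_bound l p δ _))
    have hZ := measurable_Z l p δ
    have hmZ : Measurable fun z : EE l × EE l =>
        ENNReal.ofReal ((2 * S) ^ p) * Z l p δ (z.2 - z.1) :=
      (hZ.comp (by fun_prop)).const_mul _
    rw [← lintegral_add_right _ (Measurable.lintegral_prod_right' hmZ)]
    refine setLIntegral_mono' measurableSet_ball fun x hx => ?_
    have hmx : Measurable fun y : EE l =>
        ENNReal.ofReal ((2 * S) ^ p) * Z l p δ ((x, y).2 - (x, y).1) :=
      hmZ.comp (by fun_prop : Measurable fun y : EE l => (x, y))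
    rw [← lintegral_add_right _ hmx]
    refine setLIntegral_mono' measurableSet_ball fun y hy => ?_
    by_cases hd : ‖y - x‖ < δ
    · exact (pw_near p hp u V hV hBV hu x y hx hy δ hd).trans le_self_add
    · refine le_trans ?_ le_add_self
      unfold Z
      rw [indicator_of_mem (by simpa using hd), ← ENNReal.ofReal_mul (by positivity),
        Real.rpow_neg (norm_nonneg _), div_eq_mul_inv]
      refine ENNReal.ofReal_le_ofReal ?_
      gcongr
      exact hdiff x hx y hy
  refine hsplit.trans ?_
  rw [int_W l δ hδ, int_Z l p δ hδ, ← hk1, ← hk2, ← hb, hEe,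
    ENNReal.ofReal_rpow_of_pos hEpos]
  simp only [← ENNReal.ofReal_coe_nnreal]
  rw [← ENNReal.ofReal_mul (by positivity), ← ENNReal.ofReal_mul (by positivity),
    ← ENNReal.ofReal_mul (by positivity), ← ENNReal.ofReal_mul (by positivity),
    ← ENNReal.ofReal_mul (by positivity), ← ENNReal.ofReal_add (by positivity) (by positivity),
    ← ENNReal.ofReal_mul (by positivity), ← ENNReal.ofReal_mul (by positivity)]
  refine ENNReal.ofReal_le_ofReal ?_
  have e1 : e ^ ((p - 1) / p) = A ^ (p - 1) := by
    rw [hA, ← Real.rpow_mul hEpos.le]; congr 1; ring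
  have e2 : δ * e = S * A ^ (p - 1) := by
    rw [hAp, Real.rpow_sub_one hApos.ne', hδdef]; field_simp
  have e3 : S ^ p * δ ^ (1 - p) = S * A ^ (p - 1) := by
    rw [hδdef, Real.div_rpow hS1.le hApos.le, show (1 - p) = -(p - 1) by ring,
      Real.rpow_neg hApos.le, div_inv_eq_mul, ← mul_assoc, ← Real.rpow_add hS1,
      show p + -(p - 1) = 1 by ring, Real.rpow_one]
  rw [e1, Real.mul_rpow (by norm_num) hS1.le]
  have hpos : 0 ≤ S * A ^ (p - 1) := by positivity
  calc _ = k1 * (δ * e) + b * 2 ^ p * k2 * (S ^ p * δ ^ (1 - p)) := by ring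
    _ = (k1 + b * 2 ^ p * k2) * (S * A ^ (p - 1)) := by rw [e2, e3]; ring
    _ ≤ _ := by linarith

end
end

section
/- Let ℓ ≥ 1, d ≥ 1, ν ≥ 1, 0 < s < 1, 1 ≤ p < ∞ and R > 0. There exist constants c₁ > 0 and c₂ > 0, depending only on ℓ, d, s, p and R, with the following property: for every measurable u : B^ℓ → ℝ^ν with |u| ≤ R almost everywhere, setting Q = B^ℓ × (0,1)^d ⊆ ℝ^{ℓ+d} and f(y, z) = u(y) for (y, z) ∈ Q, one has c₁ · ∬_{B^ℓ×B^ℓ} |u(y) − u(x)|^p / |y − x|^{ℓ+sp} dy dx ≤ ∬_{Q×Q} |f(Y) − f(X)|^p / |Y − X|^{ℓ+d+sp} dY dX ≤ c₂ · ( ∬_{B^ℓ×B^ℓ} |u(y) − u(x)|^p / |y − x|^{ℓ+sp} dy dx + 1 ). -/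
open Metric Set MeasureTheory
open scoped ENNReal

noncomputable section

lemma aux_vol_box {d : ℕ} (a b : Fin d → ℝ) :
    volume {w : EuclideanSpace ℝ (Fin d) | ∀ i, w i ∈ Ioo (a i) (b i)}
      = ∏ i, ENNReal.ofReal (b i - a i) := by
  rw [← Real.volume_pi_Ioo,
    ← (PiLp.volume_preserving_ofLp (Fin d)).measure_preimage
      (MeasurableSet.univ_pi fun i => measurableSet_Ioo).nullMeasurableSet]
  congr 1
  ext w
  simp

lemma aux_meas_box {d : ℕ} (a b : Fin d → ℝ) :
    MeasurableSet {w : EuclideanSpace ℝ (Fin d) | ∀ i, w i ∈ Ioo (a i) (b i)} := by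
  have : {w : EuclideanSpace ℝ (Fin d) | ∀ i, w i ∈ Ioo (a i) (b i)}
      = (WithLp.ofLp) ⁻¹' (pi univ fun i => Ioo (a i) (b i)) := by
    ext w
    simp
  rw [this]
  exact (PiLp.volume_preserving_ofLp (Fin d)).measurable
    (MeasurableSet.univ_pi fun i => measurableSet_Ioo)

/-- lower bound for the fibre integral of the kernel -/
lemma aux_lower {d : ℕ} (b : ℝ) (hb : 0 < b) (r : ℝ) (hr : 0 < r) (hr2 : r ≤ 2)
    (z : EuclideanSpace ℝ (Fin d)) (hz : ∀ i, z i ∈ Ioo (0 : ℝ) 1) :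
    ENNReal.ofReal ((1 / 4) ^ d / Real.sqrt (1 + d) ^ (b + d)) * ENNReal.ofReal (1 / r ^ b) ≤
      ∫⁻ w in {w : EuclideanSpace ℝ (Fin d) | ∀ i, w i ∈ Ioo (0 : ℝ) 1},
        ENNReal.ofReal (1 / Real.sqrt (r ^ 2 + ‖w - z‖ ^ 2) ^ (b + d)) := by
  set lo : Fin d → ℝ := fun i => if z i < 1 / 2 then z i else z i - r / 4 with hlo
  set D := {w : EuclideanSpace ℝ (Fin d) | ∀ i, w i ∈ Ioo (lo i) (lo i + r / 4)} with hD
  have hDC : D ⊆ {w : EuclideanSpace ℝ (Fin d) | ∀ i, w i ∈ Ioo (0 : ℝ) 1} := by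
    intro w hw i
    have h1 := hw i
    have h2 := hz i
    simp only [hlo, mem_Ioo] at h1 h2 ⊢
    split_ifs at h1 <;> constructor <;> linarith [h1.1, h1.2, h2.1, h2.2]
  have hvol : volume D = ENNReal.ofReal ((r / 4) ^ d) := by
    rw [hD, aux_vol_box, ENNReal.ofReal_pow (by positivity)]
    simp
  have hM : 0 < Real.sqrt (1 + d) := by positivity
  have hpt : ∀ w ∈ D, ENNReal.ofReal (1 / (r * Real.sqrt (1 + d)) ^ (b + d)) ≤
      ENNReal.ofReal (1 / Real.sqrt (r ^ 2 + ‖w - z‖ ^ 2) ^ (b + d)) := by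
    intro w hw
    have hn : ‖w - z‖ ^ 2 ≤ d * r ^ 2 := by
      rw [EuclideanSpace.norm_sq_eq]
      calc ∑ i, ‖(w - z) i‖ ^ 2 ≤ ∑ i : Fin d, r ^ 2 := by
            apply Finset.sum_le_sum
            intro i _
            have h1 := hw i
            simp only [hlo, mem_Ioo] at h1
            rw [Real.norm_eq_abs, sq_abs, PiLp.sub_apply]
            apply sq_le_sq'
            · split_ifs at h1 <;> linarith [h1.1, h1.2]
            · split_ifs at h1 <;> linarith [h1.1, h1.2]
        _ = d * r ^ 2 := by simp
    have hpos : 0 < Real.sqrt (r ^ 2 + ‖w - z‖ ^ 2) := by positivity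
    have hle : Real.sqrt (r ^ 2 + ‖w - z‖ ^ 2) ≤ r * Real.sqrt (1 + d) := by
      apply Real.sqrt_le_iff.2
      refine ⟨by positivity, ?_⟩
      rw [mul_pow, Real.sq_sqrt (by positivity)]
      nlinarith
    apply ENNReal.ofReal_le_ofReal
    apply one_div_le_one_div_of_le (by positivity)
    exact Real.rpow_le_rpow hpos.le hle (by positivity)
  calc ENNReal.ofReal ((1 / 4) ^ d / Real.sqrt (1 + d) ^ (b + d)) * ENNReal.ofReal (1 / r ^ b)
      = ENNReal.ofReal (1 / (r * Real.sqrt (1 + d)) ^ (b + d)) * volume D := by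
        rw [hvol, ← ENNReal.ofReal_mul (by positivity), ← ENNReal.ofReal_mul (by positivity)]
        congr 1
        rw [Real.mul_rpow hr.le hM.le, Real.rpow_add hr, Real.rpow_natCast]
        have : r ^ b ≠ 0 := by positivity
        have : Real.sqrt (1 + d) ^ (b + d) ≠ 0 := by positivity
        have : r ^ d ≠ 0 := by positivity
        rw [div_pow, div_pow, one_pow]
        field_simp
    _ = ∫⁻ w in D, ENNReal.ofReal (1 / (r * Real.sqrt (1 + d)) ^ (b + d)) := by
        rw [setLIntegral_const]
    _ ≤ ∫⁻ w in D, ENNReal.ofReal (1 / Real.sqrt (r ^ 2 + ‖w - z‖ ^ 2) ^ (b + d)) :=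
        setLIntegral_mono' (aux_meas_box _ _) hpt
    _ ≤ _ := lintegral_mono_set hDC

/-- the constant in the upper bound -/
def auxK (d : ℕ) (a : ℝ) : ℝ≥0∞ :=
  ∫⁻ v : EuclideanSpace ℝ (Fin d), ENNReal.ofReal (1 / Real.sqrt (1 + ‖v‖ ^ 2) ^ a)

lemma auxK_lt_top (d : ℕ) (a : ℝ) (ha : (d : ℝ) < a) : auxK d a < ∞ := by
  have h := integrable_rpow_neg_one_add_norm_sq (E := EuclideanSpace ℝ (Fin d))
    (μ := volume) (r := a) (by simpa using ha)
  have h2 := h.lintegral_lt_top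
  convert h2 using 1
  unfold auxK
  congr 1
  ext v
  congr 1
  have : 0 < 1 + ‖v‖ ^ 2 := by positivity
  rw [Real.sqrt_eq_rpow, ← Real.rpow_mul this.le, one_div, ← Real.rpow_neg this.le]
  congr 1
  ring

/-- upper bound for the fibre integral of the kernel -/
lemma aux_upper {d : ℕ} (b : ℝ) (r : ℝ) (hr : 0 < r)
    (z : EuclideanSpace ℝ (Fin d)) (C : Set (EuclideanSpace ℝ (Fin d))) :
      ∫⁻ w in C, ENNReal.ofReal (1 / Real.sqrt (r ^ 2 + ‖w - z‖ ^ 2) ^ (b + d)) ≤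
      auxK d (b + d) * ENNReal.ofReal (1 / r ^ b) := by
  refine (setLIntegral_le_lintegral _ _).trans ?_
  rw [lintegral_sub_right_eq_self
    (fun v => ENNReal.ofReal (1 / Real.sqrt (r ^ 2 + ‖v‖ ^ 2) ^ (b + d))) z]
  set F : EuclideanSpace ℝ (Fin d) → ℝ≥0∞ :=
    fun v => ENNReal.ofReal (1 / Real.sqrt (1 + ‖v‖ ^ 2) ^ (b + d)) with hF
  have hFm : Measurable F := by fun_prop
  have h1 : ∀ v : EuclideanSpace ℝ (Fin d),
      ENNReal.ofReal (1 / Real.sqrt (r ^ 2 + ‖v‖ ^ 2) ^ (b + d))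
      = ENNReal.ofReal (1 / r ^ (b + d)) * F (r⁻¹ • v) := by
    intro v
    rw [hF, ← ENNReal.ofReal_mul (by positivity)]
    congr 1
    have : r ^ 2 + ‖v‖ ^ 2 = r ^ 2 * (1 + ‖r⁻¹ • v‖ ^ 2) := by
      rw [norm_smul, Real.norm_of_nonneg (by positivity)]
      field_simp
    rw [this, Real.sqrt_mul (by positivity), Real.sqrt_sq hr.le,
      Real.mul_rpow hr.le (by positivity)]
    rw [one_div_mul_one_div]
  simp_rw [h1]
  rw [lintegral_const_mul _ (by fun_prop)]
  have h2 : ∫⁻ v, F (r⁻¹ • v) = ENNReal.ofReal (r ^ d) * auxK d (b + d) := by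
    rw [← lintegral_map (f := F) (g := fun v => r⁻¹ • v) hFm (by fun_prop),
      Measure.map_addHaar_smul _ (by positivity), lintegral_smul_measure]
    simp [auxK, hF, abs_of_pos hr]
  rw [h2, ← mul_assoc, ← ENNReal.ofReal_mul (by positivity), mul_comm]
  apply le_of_eq
  congr 2
  rw [Real.rpow_add hr, Real.rpow_natCast]
  have : r ^ b ≠ 0 := by positivity
  field_simp

lemma aux_fac {d : ℕ} (a N r : ℝ) (hN : 0 ≤ N)
    (z : EuclideanSpace ℝ (Fin d)) (C : Set (EuclideanSpace ℝ (Fin d))) :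
    ∫⁻ w in C, ENNReal.ofReal (N / Real.sqrt (r ^ 2 + ‖w - z‖ ^ 2) ^ a)
      = ENNReal.ofReal N * ∫⁻ w in C, ENNReal.ofReal (1 / Real.sqrt (r ^ 2 + ‖w - z‖ ^ 2) ^ a) := by
  rw [← lintegral_const_mul _ (by fun_prop)]
  congr 1
  ext w
  rw [← ENNReal.ofReal_mul hN, mul_one_div]

/-- Fubini part of the argument -/
lemma aux_core {l d ν : ℕ} (s p b a : ℝ) (hb : (l : ℝ) + s * p = b)
    (B : Set (EuclideanSpace ℝ (Fin l))) (hBm : MeasurableSet B)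
    (C : Set (EuclideanSpace ℝ (Fin d))) (hCm : MeasurableSet C) (hCv : volume C = 1)
    (u : EuclideanSpace ℝ (Fin l) → EuclideanSpace ℝ (Fin ν)) (hu : Measurable u)
    (c K : ℝ≥0∞)
    (hlow : ∀ x ∈ B, ∀ y ∈ B, ∀ z ∈ C, c * ENNReal.ofReal (‖u y - u x‖ ^ p / ‖y - x‖ ^ b) ≤
      ∫⁻ w in C, ENNReal.ofReal (‖u y - u x‖ ^ p /
        Real.sqrt (‖y - x‖ ^ 2 + ‖w - z‖ ^ 2) ^ a))
    (hupp : ∀ x y, ∀ z, ∫⁻ w in C, ENNReal.ofReal (‖u y - u x‖ ^ p /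
        Real.sqrt (‖y - x‖ ^ 2 + ‖w - z‖ ^ 2) ^ a) ≤
          K * ENNReal.ofReal (‖u y - u x‖ ^ p / ‖y - x‖ ^ b)) :
    (c * gagliardoE s p B u ≤ ∫⁻ X in B ×ˢ C, ∫⁻ Y in B ×ˢ C,
        ENNReal.ofReal (‖u Y.1 - u X.1‖ ^ p /
          Real.sqrt (‖Y.1 - X.1‖ ^ 2 + ‖Y.2 - X.2‖ ^ 2) ^ a)) ∧
    (∫⁻ X in B ×ˢ C, ∫⁻ Y in B ×ˢ C,
        ENNReal.ofReal (‖u Y.1 - u X.1‖ ^ p /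
          Real.sqrt (‖Y.1 - X.1‖ ^ 2 + ‖Y.2 - X.2‖ ^ 2) ^ a)) ≤ K * gagliardoE s p B u := by
  obtain ⟨g, hg⟩ : ∃ g : EuclideanSpace ℝ (Fin l) → EuclideanSpace ℝ (Fin l) → ℝ≥0∞,
    g = fun x y => ENNReal.ofReal (‖u y - u x‖ ^ p / ‖y - x‖ ^ b) := ⟨_, rfl⟩
  have hg' : ∀ x y, ENNReal.ofReal (‖u y - u x‖ ^ p / ‖y - x‖ ^ b) = g x y := by
    intro x y
    rw [hg]
  have hgm : Measurable (fun q : EuclideanSpace ℝ (Fin l) × EuclideanSpace ℝ (Fin l) =>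
      g q.1 q.2) := by
    simp only [hg]
    fun_prop
  have hE : gagliardoE s p B u = ∫⁻ x in B, ∫⁻ y in B, g x y := by
    unfold gagliardoE
    rw [hb, hg]
  simp only [hg'] at hlow hupp
  clear hg hg'
  have hgx : ∀ x, Measurable (g x) := fun x => hgm.comp measurable_prodMk_left
  have hGm : Measurable (fun x => ∫⁻ y in B, g x y) := hgm.lintegral_prod_right'
  have hin : ∀ X : EuclideanSpace ℝ (Fin l) × EuclideanSpace ℝ (Fin d),
      (∫⁻ Y in B ×ˢ C, ENNReal.ofReal (‖u Y.1 - u X.1‖ ^ p /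
        Real.sqrt (‖Y.1 - X.1‖ ^ 2 + ‖Y.2 - X.2‖ ^ 2) ^ a))
      = ∫⁻ y in B, ∫⁻ w in C, ENNReal.ofReal (‖u y - u X.1‖ ^ p /
        Real.sqrt (‖y - X.1‖ ^ 2 + ‖w - X.2‖ ^ 2) ^ a) := by
    intro X
    rw [Measure.volume_eq_prod, ← Measure.prod_restrict, lintegral_prod]
    apply Measurable.aemeasurable
    fun_prop
  have hout : ∀ c : ℝ≥0∞, (∫⁻ X in B ×ˢ C, c * ∫⁻ y in B, g X.1 y)
      = c * gagliardoE s p B u := by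
    intro c
    rw [Measure.volume_eq_prod, ← Measure.prod_restrict, lintegral_prod
      (fun X => c * ∫⁻ y in B, g X.1 y) ((hGm.comp measurable_fst).const_mul c).aemeasurable]
    simp only [lintegral_const, Measure.restrict_apply_univ, hCv, mul_one]
    rw [lintegral_const_mul _ hGm, hE]
  constructor
  · rw [← hout]
    apply setLIntegral_mono' (hBm.prod hCm)
    intro X hX
    rw [← lintegral_const_mul _ (hgx _), hin]
    apply setLIntegral_mono' hBm
    intro y hy
    exact hlow X.1 hX.1 y hy X.2 hX.2
  · rw [← hout]
    apply setLIntegral_mono' (hBm.prod hCm)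
    intro X hX
    rw [← lintegral_const_mul _ (hgx _), hin]
    apply setLIntegral_mono' hBm
    intro y hy
    exact hupp X.1 y X.2

lemma aux_gN (N t : ℝ) (hN : 0 ≤ N) :
    ENNReal.ofReal (N / t) = ENNReal.ofReal N * ENNReal.ofReal (1 / t) := by
  rw [← ENNReal.ofReal_mul hN, mul_one_div]

/-- the Gagliardo energy on `Q = B^ℓ × (0,1)^d` (with the Euclidean distance of
`ℝ^{ℓ+d}` in the kernel) of the cylindrical extension `f(y,z) = u(y)` of a bounded measurable
map `u` is comparable to `E^{s,p}_{B^ℓ}(u)`, up to an additive constant. -/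
theorem statement12 (l d ν : ℕ) (hl : 1 ≤ l) (hd : 1 ≤ d) (hν : 1 ≤ ν)
    (s p : ℝ) (hs0 : 0 < s) (hs1 : s < 1) (hp : 1 ≤ p) (R : ℝ) (hR : 0 < R) :
    ∃ c₁ c₂ : ℝ, 0 < c₁ ∧ 0 < c₂ ∧
      ∀ u : EuclideanSpace ℝ (Fin l) → EuclideanSpace ℝ (Fin ν),
        Measurable u →
        (∀ᵐ x ∂(volume.restrict (ball (0 : EuclideanSpace ℝ (Fin l)) 1)), ‖u x‖ ≤ R) →
        (ENNReal.ofReal c₁ * gagliardoE s p (ball 0 1) u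
          ≤ ∫⁻ X in (ball (0 : EuclideanSpace ℝ (Fin l)) 1 ×ˢ
                {z : EuclideanSpace ℝ (Fin d) | ∀ i, z i ∈ Ioo (0 : ℝ) 1}),
              ∫⁻ Y in (ball (0 : EuclideanSpace ℝ (Fin l)) 1 ×ˢ
                {z : EuclideanSpace ℝ (Fin d) | ∀ i, z i ∈ Ioo (0 : ℝ) 1}),
                ENNReal.ofReal (‖u Y.1 - u X.1‖ ^ p /
                  Real.sqrt (‖Y.1 - X.1‖ ^ 2 + ‖Y.2 - X.2‖ ^ 2) ^ ((l : ℝ) + d + s * p))) ∧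
        ((∫⁻ X in (ball (0 : EuclideanSpace ℝ (Fin l)) 1 ×ˢ
                {z : EuclideanSpace ℝ (Fin d) | ∀ i, z i ∈ Ioo (0 : ℝ) 1}),
              ∫⁻ Y in (ball (0 : EuclideanSpace ℝ (Fin l)) 1 ×ˢ
                {z : EuclideanSpace ℝ (Fin d) | ∀ i, z i ∈ Ioo (0 : ℝ) 1}),
                ENNReal.ofReal (‖u Y.1 - u X.1‖ ^ p /
                  Real.sqrt (‖Y.1 - X.1‖ ^ 2 + ‖Y.2 - X.2‖ ^ 2) ^ ((l : ℝ) + d + s * p)))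
          ≤ ENNReal.ofReal c₂ * (gagliardoE s p (ball 0 1) u + 1)) := by
  have hsp : 0 < s * p := by positivity
  have hb0 : 0 < (l : ℝ) + s * p := by positivity
  have hab : (l : ℝ) + d + s * p = (l : ℝ) + s * p + d := by ring
  rw [hab]
  have hCm : MeasurableSet {z : EuclideanSpace ℝ (Fin d) | ∀ i, z i ∈ Ioo (0 : ℝ) 1} :=
    aux_meas_box (fun _ => 0) (fun _ => 1)
  have hCv : volume {z : EuclideanSpace ℝ (Fin d) | ∀ i, z i ∈ Ioo (0 : ℝ) 1} = 1 := by
    refine (aux_vol_box (d := d) (fun _ => 0) (fun _ => 1)).trans ?_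
    simp
  have hKtop : auxK d ((l : ℝ) + s * p + d) < ∞ := auxK_lt_top d _ (by linarith)
  refine ⟨(1 / 4) ^ d / Real.sqrt (1 + d) ^ ((l : ℝ) + s * p + d),
    (auxK d ((l : ℝ) + s * p + d)).toReal + 1, by positivity, by positivity, ?_⟩
  intro u hu _
  have hzero : ∀ x : EuclideanSpace ℝ (Fin l), ‖u x - u x‖ ^ p = 0 := by
    intro x
    rw [sub_self, norm_zero, Real.zero_rpow (by linarith)]
  have key := aux_core s p ((l : ℝ) + s * p) ((l : ℝ) + s * p + d) rfl
    (ball (0 : EuclideanSpace ℝ (Fin l)) 1) measurableSet_ball _ hCm hCv u hu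
    (ENNReal.ofReal ((1 / 4) ^ d / Real.sqrt (1 + d) ^ ((l : ℝ) + s * p + d)))
    (auxK d ((l : ℝ) + s * p + d)) ?_ ?_
  · refine ⟨key.1, key.2.trans ?_⟩
    refine mul_le_mul' ?_ le_self_add
    rw [ENNReal.ofReal_add ENNReal.toReal_nonneg zero_le_one, ENNReal.ofReal_toReal hKtop.ne]
    exact le_self_add
  · intro x hx y hy z hz
    rw [aux_fac _ _ _ (by positivity), aux_gN (‖u y - u x‖ ^ p) (‖y - x‖ ^ _) (by positivity),
      mul_left_comm]
    rcases eq_or_ne y x with rfl | hne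
    · rw [hzero, ENNReal.ofReal_zero, zero_mul, zero_mul]
    · refine mul_le_mul' le_rfl ?_
      refine aux_lower _ hb0 _ (norm_pos_iff.2 (sub_ne_zero.2 hne)) ?_ z hz
      have h1 : ‖x‖ < 1 := by simpa using hx
      have h2 : ‖y‖ < 1 := by simpa using hy
      linarith [norm_sub_le y x]
  · intro x y z
    rw [aux_fac _ _ _ (by positivity), aux_gN (‖u y - u x‖ ^ p) (‖y - x‖ ^ _) (by positivity),
      mul_left_comm]
    rcases eq_or_ne y x with rfl | hne
    · rw [hzero, ENNReal.ofReal_zero, zero_mul, zero_mul]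
    · refine mul_le_mul' le_rfl ?_
      exact aux_upper _ _ (norm_pos_iff.2 (sub_ne_zero.2 hne)) z _

end
end

section
/- Let ℓ ≥ 1, ν ≥ 1, let p ≥ 2 be a real number, and set s = 1 − 1/p (so that sp = p − 1 ≥ 1). Let K₁, K₂ ⊆ ℝ^ν be nonempty disjoint compact sets, and let u : B^ℓ → ℝ^ν be measurable with u(x) ∈ K₁ ∪ K₂ for almost every x ∈ B^ℓ and with E^{s,p}_{B^ℓ}(u) < ∞. Then either u(x) ∈ K₁ for almost every x ∈ B^ℓ, or u(x) ∈ K₂ for almost every x ∈ B^ℓ. -/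
open Metric Set MeasureTheory
open scoped ENNReal

noncomputable section

/-- The singular kernel. -/
def gagK {l : ℕ} (h : EuclideanSpace ℝ (Fin l)) : ℝ≥0∞ := ENNReal.ofReal ((‖h‖ ^ (l + 1))⁻¹)

lemma gagK_meas {l : ℕ} : Measurable (gagK (l := l)) := by
  unfold gagK; fun_prop

lemma gagK_two {l : ℕ} (h : EuclideanSpace ℝ (Fin l)) :
    gagK ((2 : ℝ) • h) * (2 ^ (l + 1)) = gagK h := by
  unfold gagK
  have : (2 : ℝ≥0∞) ^ (l + 1) = ENNReal.ofReal (2 ^ (l + 1)) := by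
    rw [ENNReal.ofReal_pow (by norm_num)]; simp
  rw [this, ← ENNReal.ofReal_mul (by positivity), norm_smul, mul_pow, mul_inv]
  congr 1
  simp only [Real.norm_ofNat]
  field_simp

lemma gag_scale {l : ℕ} (F : EuclideanSpace ℝ (Fin l) → ℝ≥0∞) :
    ∫⁻ h, F h = 2 ^ l * ∫⁻ h, F ((2 : ℝ) • h) := by
  have h1 : ∫⁻ h, F ((2 : ℝ) • h)
      = ∫⁻ h, F h ∂(Measure.map (fun x : EuclideanSpace ℝ (Fin l) => (2 : ℝ) • x) volume) := by
    rw [(measurableEmbedding_const_smul₀ (two_ne_zero : (2 : ℝ) ≠ 0)).lintegral_map]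
  rw [h1, Measure.map_addHaar_smul volume (two_ne_zero : (2 : ℝ) ≠ 0), lintegral_smul_measure,
    finrank_euclideanSpace_fin, smul_eq_mul, ← mul_assoc]
  have : (2 : ℝ≥0∞) ^ l * ENNReal.ofReal |((2 : ℝ) ^ l)⁻¹| = 1 := by
    have : (2 : ℝ≥0∞) ^ l = ENNReal.ofReal (2 ^ l) := by
      rw [ENNReal.ofReal_pow (by norm_num)]; simp
    rw [this, ← ENNReal.ofReal_mul (by positivity), abs_of_pos (by positivity),
      mul_inv_cancel₀ (by positivity)]
    simp
  rw [this, one_mul]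

lemma gag_zero {l : ℕ} (hl : 1 ≤ l) (φ : EuclideanSpace ℝ (Fin l) → ℝ≥0∞)
    (h2 : ∀ h, φ ((2 : ℝ) • h) ≤ 2 * φ h)
    (h0 : ∀ h, 2 ≤ ‖h‖ → φ h = 0) (hfin : ∫⁻ h, φ h * gagK h ≠ ⊤) :
    ∫⁻ h, φ h * gagK h = 0 := by
  have step : ∀ r : ℝ, 0 < r → ∫⁻ h in ball 0 (2 * r), φ h * gagK h
      ≤ ∫⁻ h in ball 0 r, φ h * gagK h := by
    intro r hr
    rw [← lintegral_indicator measurableSet_ball, ← lintegral_indicator measurableSet_ball,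
      gag_scale, ← lintegral_const_mul' _ _ (by simp)]
    apply lintegral_mono
    intro h
    by_cases hh : h ∈ ball (0 : EuclideanSpace ℝ (Fin l)) r
    · have hh' : (2 : ℝ) • h ∈ ball (0 : EuclideanSpace ℝ (Fin l)) (2 * r) := by
        simp only [mem_ball_zero_iff, norm_smul, Real.norm_ofNat] at hh ⊢
        linarith
      simp only [indicator_of_mem hh, indicator_of_mem hh']
      calc 2 ^ l * (φ ((2 : ℝ) • h) * gagK ((2 : ℝ) • h))
          ≤ 2 ^ l * (2 * φ h * gagK ((2 : ℝ) • h)) := by gcongr; exact h2 h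
        _ = φ h * (gagK ((2 : ℝ) • h) * 2 ^ (l + 1)) := by ring
        _ = φ h * gagK h := by rw [gagK_two]
    · have hh' : (2 : ℝ) • h ∉ ball (0 : EuclideanSpace ℝ (Fin l)) (2 * r) := by
        simp only [mem_ball_zero_iff, norm_smul, Real.norm_ofNat, not_lt] at hh ⊢
        linarith
      simp [indicator_of_notMem hh, indicator_of_notMem hh']
  have all : ∀ n : ℕ, ∫⁻ h, φ h * gagK h ≤ ∫⁻ h in ball 0 (2 * (1 / 2 : ℝ) ^ n), φ h * gagK h := by
    intro n
    induction n with
    | zero =>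
      rw [← lintegral_indicator measurableSet_ball]
      apply lintegral_mono
      intro h
      by_cases hh : h ∈ ball (0 : EuclideanSpace ℝ (Fin l)) (2 * (1 / 2 : ℝ) ^ 0)
      · simp only [indicator_of_mem hh, le_refl]
      · simp only [mem_ball_zero_iff, pow_zero, mul_one, not_lt] at hh
        simp [h0 h hh]
    | succ n ih =>
      refine ih.trans ?_
      have := step (2 * (1 / 2 : ℝ) ^ (n + 1)) (by positivity)
      rwa [show 2 * (2 * (1 / 2 : ℝ) ^ (n + 1)) = 2 * (1 / 2 : ℝ) ^ n by ring] at this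
  have lim : Filter.Tendsto
      (fun n : ℕ => ∫⁻ h in ball (0 : EuclideanSpace ℝ (Fin l)) (2 * (1 / 2 : ℝ) ^ n), φ h * gagK h)
      Filter.atTop (nhds 0) := by
    apply tendsto_setLIntegral_zero hfin
    have e : (volume ∘ fun n : ℕ => ball (0 : EuclideanSpace ℝ (Fin l)) (2 * (1 / 2 : ℝ) ^ n))
        = fun n : ℕ => ENNReal.ofReal ((2 * (1 / 2 : ℝ) ^ n) ^ l)
          * volume (ball (0 : EuclideanSpace ℝ (Fin l)) 1) := by
      funext n
      simp only [Function.comp]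
      rw [Measure.addHaar_ball_of_pos volume _ (by positivity), finrank_euclideanSpace_fin]
    rw [e]
    have t1 : Filter.Tendsto (fun n : ℕ => (2 * (1 / 2 : ℝ) ^ n) ^ l) Filter.atTop (nhds 0) := by
      have := ((tendsto_pow_atTop_nhds_zero_of_lt_one (r := (1 / 2 : ℝ)) (by norm_num)
        (by norm_num)).const_mul 2).pow l
      simpa [zero_pow (by omega : l ≠ 0)] using this
    have t2 := ENNReal.Tendsto.mul_const (b := volume (ball (0 : EuclideanSpace ℝ (Fin l)) 1))
      (ENNReal.tendsto_ofReal t1) (Or.inr measure_ball_lt_top.ne)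
    simpa using t2
  exact le_antisymm (ge_of_tendsto' lim all) bot_le

/-- pairs in the unit ball separated by `S`. -/
def gagD {l : ℕ} (S : Set (EuclideanSpace ℝ (Fin l))) :
    Set (EuclideanSpace ℝ (Fin l) × EuclideanSpace ℝ (Fin l)) :=
  {q | q.1 ∈ ball 0 1 ∧ q.2 ∈ ball 0 1 ∧ ¬ (q.1 ∈ S ↔ q.2 ∈ S)}

lemma gagD_meas {l : ℕ} {S : Set (EuclideanSpace ℝ (Fin l))} (hS : MeasurableSet S) :
    MeasurableSet (gagD S) := by
  have h1 : MeasurableSet {q : EuclideanSpace ℝ (Fin l) × EuclideanSpace ℝ (Fin l) | q.1 ∈ S} :=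
    measurable_fst hS
  have h2 : MeasurableSet {q : EuclideanSpace ℝ (Fin l) × EuclideanSpace ℝ (Fin l) | q.2 ∈ S} :=
    measurable_snd hS
  have h3 : MeasurableSet {q : EuclideanSpace ℝ (Fin l) × EuclideanSpace ℝ (Fin l) |
    q.1 ∈ ball 0 1} := measurable_fst measurableSet_ball
  have h4 : MeasurableSet {q : EuclideanSpace ℝ (Fin l) × EuclideanSpace ℝ (Fin l) |
    q.2 ∈ ball 0 1} := measurable_snd measurableSet_ball
  exact h3.inter (h4.inter (MeasurableSet.iff h1 h2).compl)

lemma gag_key {l : ℕ} (hl : 1 ≤ l) (S : Set (EuclideanSpace ℝ (Fin l))) (hS : MeasurableSet S)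
    (hfin : ∫⁻ x, ∫⁻ y, (gagD S).indicator 1 (x, y) * gagK (y - x) ≠ ⊤) :
    ∫⁻ x, ∫⁻ y, (gagD S).indicator 1 (x, y) * gagK (y - x) = 0 := by
  have hW : Measurable ((gagD S).indicator (1 : EuclideanSpace ℝ (Fin l) × EuclideanSpace ℝ (Fin l) → ℝ≥0∞)) :=
    measurable_one.indicator (gagD_meas hS)
  set φ : EuclideanSpace ℝ (Fin l) → ℝ≥0∞ := fun h =>
    ∫⁻ x, (gagD S).indicator 1 (x, x + h) with hφ
  have eq : ∫⁻ x, ∫⁻ y, (gagD S).indicator 1 (x, y) * gagK (y - x) = ∫⁻ h, φ h * gagK h := by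
    have e1 : ∀ x, ∫⁻ y, (gagD S).indicator 1 (x, y) * gagK (y - x)
        = ∫⁻ h, (gagD S).indicator 1 (x, x + h) * gagK h := by
      intro x
      rw [← lintegral_add_left_eq_self _ x]
      simp
    simp_rw [e1]
    rw [lintegral_lintegral_swap]
    · congr 1
      funext h
      rw [hφ]
      rw [lintegral_mul_const]
      exact hW.comp (by fun_prop)
    · apply Measurable.aemeasurable
      apply Measurable.mul
      · exact hW.comp (f := fun q : EuclideanSpace ℝ (Fin l) × EuclideanSpace ℝ (Fin l) =>
          (q.1, q.1 + q.2)) (by fun_prop)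
      · exact gagK_meas.comp measurable_snd
  rw [eq] at hfin ⊢
  refine gag_zero hl φ ?_ ?_ hfin
  · intro h
    have e2 : ∫⁻ x, (gagD S).indicator (1 : EuclideanSpace ℝ (Fin l) × EuclideanSpace ℝ (Fin l) → ℝ≥0∞) (x + h, x + h + h) = φ h :=
      lintegral_add_right_eq_self (fun x => (gagD S).indicator (1 : EuclideanSpace ℝ (Fin l) × EuclideanSpace ℝ (Fin l) → ℝ≥0∞) (x, x + h)) h
    rw [two_mul]
    nth_rewrite 2 [← e2]
    simp only [hφ]
    have hm1 : Measurable (fun x => (gagD S).indicator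
        (1 : EuclideanSpace ℝ (Fin l) × EuclideanSpace ℝ (Fin l) → ℝ≥0∞) (x, x + h)) :=
      hW.comp (f := fun x : EuclideanSpace ℝ (Fin l) => (x, x + h)) (by fun_prop)
    rw [← lintegral_add_left hm1]
    apply lintegral_mono
    intro x
    simp only
    by_cases hx : (x, x + (2 : ℝ) • h) ∈ gagD S
    · have hmid : x + h ∈ ball (0 : EuclideanSpace ℝ (Fin l)) 1 := by
        have := (convex_ball (0 : EuclideanSpace ℝ (Fin l)) 1) hx.1 hx.2.1
          (a := 1 / 2) (b := 1 / 2) (by norm_num) (by norm_num) (by norm_num)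
        convert this using 1
        simp only [smul_add, smul_smul]
        module
      have e3 : x + h + h = x + (2 : ℝ) • h := by module
      rw [e3, indicator_of_mem hx]
      by_cases hm : x + h ∈ S ↔ x ∈ S
      · have : (x + h, x + (2 : ℝ) • h) ∈ gagD S := ⟨hmid, hx.2.1, by
          have := hx.2.2
          simp only at this ⊢
          tauto⟩
        rw [indicator_of_mem this]
        exact le_add_self
      · have : (x, x + h) ∈ gagD S := ⟨hx.1, hmid, by
          simp only
          tauto⟩
        rw [indicator_of_mem this]
        exact le_self_add
    · rw [indicator_of_notMem hx]
      exact bot_le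
  · intro h hh
    have : ∀ x, (gagD S).indicator (1 : EuclideanSpace ℝ (Fin l) × EuclideanSpace ℝ (Fin l) → ℝ≥0∞) (x, x + h) = 0 := by
      intro x
      apply indicator_of_notMem
      rintro ⟨a, b, -⟩
      simp only [mem_ball_zero_iff] at a b
      have := norm_sub_le (x + h) x
      simp only [add_sub_cancel_left] at this
      linarith
    simp [hφ, this]

lemma gag_final {l : ℕ} (hl : 1 ≤ l) (S : Set (EuclideanSpace ℝ (Fin l))) (hS : MeasurableSet S)
    (hfin : ∫⁻ x, ∫⁻ y, (gagD S).indicator 1 (x, y) * gagK (y - x) ≠ ⊤) :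
    volume (ball 0 1 ∩ S) = 0 ∨ volume (ball 0 1 \ S) = 0 := by
  have h0 := gag_key hl S hS hfin
  have hW : Measurable ((gagD S).indicator (1 : EuclideanSpace ℝ (Fin l) × EuclideanSpace ℝ (Fin l) → ℝ≥0∞)) :=
    measurable_one.indicator (gagD_meas hS)
  have hm : Measurable (fun q : EuclideanSpace ℝ (Fin l) × EuclideanSpace ℝ (Fin l) =>
      (gagD S).indicator 1 q * gagK (q.2 - q.1)) :=
    hW.mul (gagK_meas.comp (by fun_prop))
  rw [← lintegral_prod (fun q : EuclideanSpace ℝ (Fin l) × EuclideanSpace ℝ (Fin l) =>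
      (gagD S).indicator 1 q * gagK (q.2 - q.1)) hm.aemeasurable, lintegral_eq_zero_iff hm] at h0
  have h1 : (volume.prod volume) ((ball 0 1 ∩ S) ×ˢ (ball 0 1 \ S)) = 0 := by
    refine measure_mono_null ?_ h0
    rintro ⟨x, y⟩ ⟨⟨hx, hxS⟩, hy, hyS⟩
    have hD : (x, y) ∈ gagD S := ⟨hx, hy, by simp only; tauto⟩
    have hne : y - x ≠ 0 := by
      intro h
      rw [sub_eq_zero] at h
      simp only at hxS hyS
      exact hyS (h ▸ hxS)
    simp only [mem_compl_iff, mem_ofPred_eq, indicator_of_mem hD, Pi.one_apply, one_mul,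
      Pi.zero_apply, gagK, ENNReal.ofReal_eq_zero, not_le]
    have := norm_pos_iff.2 hne
    positivity
  rw [Measure.prod_prod] at h1
  exact mul_eq_zero.1 h1

lemma gag_pt {l : ℕ} {p d a t : ℝ} (hp : 2 ≤ p) (hd : 0 < d) (hda : d ≤ a) (ht : 0 < t)
    (ht2 : t ≤ 2) :
    (t ^ (l + 1))⁻¹ ≤ (2 ^ (p - 2) / d ^ p) * (a ^ p / t ^ ((l : ℝ) + (1 - 1 / p) * p)) := by
  have e : (l : ℝ) + (1 - 1 / p) * p = ((l + 1 : ℕ) : ℝ) + (p - 2) := by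
    have : p ≠ 0 := by linarith
    push_cast
    field_simp
    ring
  rw [e, Real.rpow_add ht, Real.rpow_natCast]
  have h1 : d ^ p ≤ a ^ p := Real.rpow_le_rpow hd.le hda (by linarith)
  have h2 : t ^ (p - 2) ≤ 2 ^ (p - 2) := Real.rpow_le_rpow ht.le ht2 (by linarith)
  have h3 : 0 < d ^ p := Real.rpow_pos_of_pos hd _
  have h4 : 0 < t ^ (p - 2) := Real.rpow_pos_of_pos ht _
  have h5 : 0 < t ^ (l + 1) := by positivity
  have : (2 ^ (p - 2) / d ^ p) * (a ^ p / (t ^ (l + 1) * t ^ (p - 2)))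
    = (t ^ (l + 1))⁻¹ * ((2 ^ (p - 2) / t ^ (p - 2)) * (a ^ p / d ^ p)) := by
    field_simp
  rw [this]
  apply le_mul_of_one_le_right (by positivity)
  exact one_le_mul_of_one_le_of_one_le ((one_le_div h4).2 h2) ((one_le_div h3).2 h1)

/-- for `p ≥ 2` and `s = 1 - 1/p`, a map of finite Gagliardo `E^{s,p}` energy on
`B^ℓ` taking values a.e. in the union of two disjoint nonempty compact sets takes its values
a.e. in one of them. -/
theorem statement14 (l ν : ℕ) (hl : 1 ≤ l) (hν : 1 ≤ ν) (p : ℝ) (hp : 2 ≤ p)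
    (K₁ K₂ : Set (EuclideanSpace ℝ (Fin ν)))
    (hK₁c : IsCompact K₁) (hK₂c : IsCompact K₂)
    (hK₁ne : K₁.Nonempty) (hK₂ne : K₂.Nonempty) (hdisj : Disjoint K₁ K₂)
    (u : EuclideanSpace ℝ (Fin l) → EuclideanSpace ℝ (Fin ν)) (hmeas : Measurable u)
    (hval : ∀ᵐ x ∂(volume.restrict (ball (0 : EuclideanSpace ℝ (Fin l)) 1)), u x ∈ K₁ ∪ K₂)
    (hE : gagliardoE (1 - 1 / p) p (ball 0 1) u < ⊤) :
    (∀ᵐ x ∂(volume.restrict (ball (0 : EuclideanSpace ℝ (Fin l)) 1)), u x ∈ K₁) ∨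
    (∀ᵐ x ∂(volume.restrict (ball (0 : EuclideanSpace ℝ (Fin l)) 1)), u x ∈ K₂) := by
  obtain ⟨d, hd, hK⟩ := Metric.exists_pos_forall_lt_edist hK₁c hK₂c.isClosed hdisj
  have hS : MeasurableSet (u ⁻¹' K₁) := hmeas hK₁c.measurableSet
  have hK' : ∀ a ∈ K₁, ∀ b ∈ K₂, (d : ℝ) ≤ ‖a - b‖ := by
    intro a ha b hb
    have := hK a ha b hb
    rw [edist_nndist, ENNReal.coe_lt_coe, ← NNReal.coe_lt_coe, coe_nndist, dist_eq_norm] at this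
    exact this.le
  set C : ℝ := 2 ^ (p - 2) / (d : ℝ) ^ p with hC
  have hC0 : 0 ≤ C := by positivity
  have hfin : ∫⁻ x, ∫⁻ y, (gagD (u ⁻¹' K₁)).indicator 1 (x, y) * gagK (y - x) ≠ ⊤ := by
    have hle : ∫⁻ x, ∫⁻ y, (gagD (u ⁻¹' K₁)).indicator 1 (x, y) * gagK (y - x)
        ≤ ENNReal.ofReal C * gagliardoE (1 - 1 / p) p (ball 0 1) u := by
      unfold gagliardoE
      rw [← lintegral_const_mul' _ _ ENNReal.ofReal_ne_top,
        ← lintegral_indicator measurableSet_ball]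
      have hv := (ae_restrict_iff' measurableSet_ball).1 hval
      apply lintegral_mono_ae
      filter_upwards [hv] with x hx
      by_cases hxB : x ∈ ball (0 : EuclideanSpace ℝ (Fin l)) 1
      · rw [indicator_of_mem hxB, ← lintegral_const_mul' _ _ ENNReal.ofReal_ne_top,
          ← lintegral_indicator measurableSet_ball]
        apply lintegral_mono_ae
        filter_upwards [hv] with y hy
        by_cases hD : (x, y) ∈ gagD (u ⁻¹' K₁)
        · have hyB := hD.2.1
          simp only at hyB
          rw [indicator_of_mem hD, indicator_of_mem hyB, ← ENNReal.ofReal_mul hC0,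
            Pi.one_apply, one_mul, gagK]
          apply ENNReal.ofReal_le_ofReal
          have hn := hD.2.2
          simp only [mem_preimage] at hn
          have hda : (d : ℝ) ≤ ‖u y - u x‖ := by
            rcases hx hxB with h1 | h1 <;> rcases hy hyB with h2 | h2
            · exact absurd ⟨fun _ => h2, fun _ => h1⟩ hn
            · rw [norm_sub_rev]; exact hK' _ h1 _ h2
            · exact hK' _ h2 _ h1
            · exact absurd ⟨fun h => absurd h1 (disjoint_left.1 hdisj h),
                fun h => absurd h2 (disjoint_left.1 hdisj h)⟩ hn
          have hne : y - x ≠ 0 := by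
            intro h
            rw [sub_eq_zero] at h
            subst h
            exact hn Iff.rfl
          refine gag_pt hp (NNReal.coe_pos.2 hd) hda (norm_pos_iff.2 hne) ?_
          have := norm_sub_le y x
          rw [mem_ball_zero_iff] at hyB hxB
          linarith
        · rw [indicator_of_notMem hD]
          simp
      · have : ∀ y, (gagD (u ⁻¹' K₁)).indicator (1 : EuclideanSpace ℝ (Fin l) × EuclideanSpace ℝ (Fin l) → ℝ≥0∞) (x, y) = 0 := fun y =>
          indicator_of_notMem (fun h => hxB h.1) _
        simp [this]
    exact ne_top_of_le_ne_top (ENNReal.mul_ne_top ENNReal.ofReal_ne_top hE.ne) hle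
  rcases gag_final hl _ hS hfin with h | h
  · right
    rw [ae_restrict_iff' measurableSet_ball] at hval ⊢
    filter_upwards [hval, measure_eq_zero_iff_ae_notMem.1 h] with x hx hx2 hxB
    rcases hx hxB with h1 | h1
    · exact absurd ⟨hxB, h1⟩ hx2
    · exact h1
  · left
    rw [ae_restrict_iff' measurableSet_ball]
    filter_upwards [measure_eq_zero_iff_ae_notMem.1 h] with x hx2 hxB
    by_contra h1
    exact hx2 ⟨hxB, h1⟩

end
end

section
/- Let ν ≥ 1, let m ≥ 3 be an integer, let 2 ≤ p < m be a real number, and set k = ⌊p⌋ (so 2 ≤ k ≤ m − 1). Let f : S^{k−1} → ℝ^ν be Lipschitz. Define u on the open unit ball B^{m−1} ⊆ ℝ^{m−1} = ℝ^k × ℝ^{m−1−k} by u(x', x'') = f(x'/|x'|) for x' ≠ 0 (and arbitrarily on the null set {x' = 0}). Then E^{1−1/p, p}_{B^{m−1}}(u) = ∬_{B^{m−1}×B^{m−1}} |u(y) − u(x)|^p / |y − x|^{m+p−2} dy dx < ∞. -/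
open Metric Set MeasureTheory
open scoped ENNReal

noncomputable section

lemma aux_lint {E : Type*} [NormedAddCommGroup E] [NormedSpace ℝ E] [FiniteDimensional ℝ E]
    [MeasurableSpace E] [BorelSpace E] (μ : Measure E) [μ.IsAddHaarMeasure]
    (hd : 1 ≤ Module.finrank ℝ E) {α : ℝ} (r : ℝ) (hα : α < Module.finrank ℝ E) :
    ∫⁻ x in ball (0 : E) r, ENNReal.ofReal (‖x‖ ^ (-α)) ∂μ < ⊤ := by
  have h : IntegrableOn (fun x : E => ‖x‖ ^ (-α)) (ball 0 r) μ := by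
    apply integrableOn_ball_of_norm_le_rpow hd (C := 1) hα
    · refine Filter.Eventually.of_forall fun x => ?_
      rw [Real.norm_of_nonneg (by positivity), one_mul]
    · exact (measurable_norm.pow_const _).aestronglyMeasurable
  exact h.lintegral_lt_top

lemma aux_normalize {E : Type*} [NormedAddCommGroup E] [NormedSpace ℝ E] (x y : E)
    (hx : x ≠ 0) (hy : y ≠ 0) :
    ‖‖y‖⁻¹ • y - ‖x‖⁻¹ • x‖ ≤ 2 * (‖y - x‖ / ‖x‖) := by
  have hx' : 0 < ‖x‖ := norm_pos_iff.2 hx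
  have hy' : 0 < ‖y‖ := norm_pos_iff.2 hy
  have e : ‖y‖⁻¹ • y - ‖x‖⁻¹ • x = (‖y‖⁻¹ - ‖x‖⁻¹) • y + ‖x‖⁻¹ • (y - x) := by module
  rw [e]
  refine (norm_add_le _ _).trans ?_
  rw [norm_smul, norm_smul, norm_inv, norm_norm]
  have h1 : ‖‖y‖⁻¹ - ‖x‖⁻¹‖ * ‖y‖ ≤ ‖y - x‖ / ‖x‖ := by
    have : ‖y‖⁻¹ - ‖x‖⁻¹ = (‖x‖ - ‖y‖) / (‖x‖ * ‖y‖) := by field_simp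
    rw [this, norm_div, Real.norm_eq_abs, Real.norm_of_nonneg (by positivity)]
    have h2 := abs_norm_sub_norm_le x y
    rw [norm_sub_rev] at h2
    calc |‖x‖ - ‖y‖| / (‖x‖ * ‖y‖) * ‖y‖ = |‖x‖ - ‖y‖| / ‖x‖ := by field_simp
      _ ≤ _ := by gcongr
  have h3 : ‖x‖⁻¹ * ‖y - x‖ = ‖y - x‖ / ‖x‖ := by field_simp
  linarith

lemma aux_real (D K' N a S p q θ : ℝ) (hD : 0 ≤ D) (hK : 0 ≤ K') (hN : 0 < N) (ha : 0 < a)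
    (hS : N ≤ S) (hp : 0 < p) (hq : 0 ≤ q) (hθ0 : 0 < θ) (hθp : θ ≤ p)
    (h1 : D ≤ K') (h2 : D ≤ K' * (N / a)) :
    D ^ p / S ^ q ≤ K' ^ p * a ^ (-θ) * N ^ (-(q - θ)) := by
  have key : D ^ p ≤ K' ^ p * (N / a) ^ θ := by
    by_cases h : N / a ≤ 1
    · calc D ^ p ≤ (K' * (N / a)) ^ p := by gcongr
        _ = K' ^ p * (N / a) ^ p := Real.mul_rpow hK (by positivity)
        _ ≤ K' ^ p * (N / a) ^ θ := by
          gcongr ?_ * ?_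
          exact Real.rpow_le_rpow_of_exponent_ge (by positivity) h hθp
    · push Not at h
      calc D ^ p ≤ K' ^ p := by gcongr
        _ ≤ K' ^ p * (N / a) ^ θ :=
          le_mul_of_one_le_right (by positivity) (Real.one_le_rpow h.le hθ0.le)
  calc D ^ p / S ^ q ≤ K' ^ p * (N / a) ^ θ / N ^ q := by gcongr
    _ = _ := by
      rw [Real.div_rpow hN.le ha.le, Real.rpow_neg ha.le, neg_sub, Real.rpow_sub hN]
      field_simp

/-- for `2 ≤ p < m` and `k = ⌊p⌋`, the zero-homogeneous (in the first `k`
variables) extension `u(x', x'') = f(x'/|x'|)` of a Lipschitz map `f : S^{k-1} → ℝ^ν` has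
finite Gagliardo `E^{1-1/p,p}` energy on the unit ball of `ℝ^{m-1} = ℝ^k × ℝ^{m-1-k}`
(the kernel uses the Euclidean distance, with exponent `(m-1) + (p-1) = m + p - 2`). -/
theorem statement15 (ν m : ℕ) (hν : 1 ≤ ν) (hm : 3 ≤ m)
    (p : ℝ) (hp2 : 2 ≤ p) (hpm : p < m) (k : ℕ) (hk : k = ⌊p⌋₊)
    (f : EuclideanSpace ℝ (Fin k) → EuclideanSpace ℝ (Fin ν))
    (K : NNReal) (hf : LipschitzOnWith K f (sphere 0 1)) :
    ∀ u : EuclideanSpace ℝ (Fin k) × EuclideanSpace ℝ (Fin (m - 1 - k)) →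
        EuclideanSpace ℝ (Fin ν),
      (∀ x : EuclideanSpace ℝ (Fin k) × EuclideanSpace ℝ (Fin (m - 1 - k)),
        x.1 ≠ 0 → u x = f (‖x.1‖⁻¹ • x.1)) →
      (∫⁻ x in {x : EuclideanSpace ℝ (Fin k) × EuclideanSpace ℝ (Fin (m - 1 - k)) |
            ‖x.1‖ ^ 2 + ‖x.2‖ ^ 2 < 1},
        ∫⁻ y in {y : EuclideanSpace ℝ (Fin k) × EuclideanSpace ℝ (Fin (m - 1 - k)) |
            ‖y.1‖ ^ 2 + ‖y.2‖ ^ 2 < 1},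
          ENNReal.ofReal (‖u y - u x‖ ^ p /
            Real.sqrt (‖y.1 - x.1‖ ^ 2 + ‖y.2 - x.2‖ ^ 2) ^ ((m : ℝ) + p - 2))) < ⊤ := by
  have hkp : (k : ℝ) ≤ p := hk ▸ Nat.floor_le (by linarith)
  have hpk : p < k + 1 := hk ▸ Nat.lt_floor_add_one p
  have hk2 : 2 ≤ k := by rw [hk]; exact Nat.le_floor (by exact_mod_cast hp2)
  have hkm : k < m := by exact_mod_cast hkp.trans_lt hpm
  have hml : m = k + (m - 1 - k) + 1 := by omega
  generalize m - 1 - k = l at hml ⊢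
  intro u hu
  have hm' : (m : ℝ) = k + l + 1 := by exact_mod_cast hml
  have hHaar : (volume : Measure (EuclideanSpace ℝ (Fin k) ×
      EuclideanSpace ℝ (Fin l))).IsAddHaarMeasure := by
    rw [Measure.volume_eq_prod]
    infer_instance
  set q : ℝ := (m : ℝ) + p - 2 with hq
  obtain ⟨θ, hθ1, hθ2⟩ : ∃ θ : ℝ, p - 1 < θ ∧ θ < k := exists_between (by linarith)
  have hm1 : (3 : ℝ) ≤ m := by exact_mod_cast hm
  have : Nonempty (Fin k) := ⟨⟨0, by omega⟩⟩
  set C : ℝ := (2 * K) ^ p with hC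
  have hC0 : 0 ≤ C := by positivity
  set B := {x : EuclideanSpace ℝ (Fin k) × EuclideanSpace ℝ (Fin l) |
            ‖x.1‖ ^ 2 + ‖x.2‖ ^ 2 < 1} with hB
  have hBb : B ⊆ ball (0 : EuclideanSpace ℝ (Fin k)) 1 ×ˢ ball (0 : EuclideanSpace ℝ (Fin l)) 1 := by
    rintro x hx
    simp only [hB, mem_ofPred_eq] at hx
    simp only [mem_prod, mem_ball_zero_iff]
    constructor <;> nlinarith [norm_nonneg x.1, norm_nonneg x.2]
  have hBm : MeasurableSet B := by
    apply measurableSet_lt <;> fun_prop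
  have hnull : ∀ᵐ x : EuclideanSpace ℝ (Fin k) × EuclideanSpace ℝ (Fin l), x.1 ≠ 0 := by
    have : ∀ᵐ a : EuclideanSpace ℝ (Fin k), a ≠ 0 := Measure.ae_ne volume 0
    exact Measure.quasiMeasurePreserving_fst.ae this
  -- the pointwise bound
  have hpt : ∀ x y : EuclideanSpace ℝ (Fin k) × EuclideanSpace ℝ (Fin l), x.1 ≠ 0 → y.1 ≠ 0 →
      ‖u y - u x‖ ^ p / Real.sqrt (‖y.1 - x.1‖ ^ 2 + ‖y.2 - x.2‖ ^ 2) ^ q ≤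
        C * ‖x.1‖ ^ (-θ) * ‖y - x‖ ^ (-(q - θ)) := by
    intro x y hx hy
    rcases eq_or_ne y x with rfl | hne
    · rw [sub_self, norm_zero, Real.zero_rpow (by linarith), zero_div]
      positivity
    have hN : 0 < ‖y - x‖ := norm_pos_iff.2 (sub_ne_zero.2 hne)
    have hsx : ‖x.1‖⁻¹ • x.1 ∈ sphere (0 : EuclideanSpace ℝ (Fin k)) 1 := by
      simp [norm_smul, hx]
    have hsy : ‖y.1‖⁻¹ • y.1 ∈ sphere (0 : EuclideanSpace ℝ (Fin k)) 1 := by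
      simp [norm_smul, hy]
    have hL := hf.norm_sub_le hsy hsx
    rw [← hu x hx, ← hu y hy] at hL
    have hx' : 0 < ‖x.1‖ := norm_pos_iff.2 hx
    apply aux_real _ _ _ _ _ _ _ _ (norm_nonneg _) (by positivity) hN hx' _ (by linarith)
      (by linarith) (by linarith) (by linarith)
    · refine hL.trans ?_
      have : ‖‖y.1‖⁻¹ • y.1 - ‖x.1‖⁻¹ • x.1‖ ≤ 1 + 1 := by
        refine (norm_sub_le _ _).trans ?_
        rw [mem_sphere_zero_iff_norm.1 hsx, mem_sphere_zero_iff_norm.1 hsy]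
      nlinarith [K.2]
    · refine hL.trans ?_
      have h1 := aux_normalize x.1 y.1 hx hy
      have h2 : ‖y.1 - x.1‖ / ‖x.1‖ ≤ ‖y - x‖ / ‖x.1‖ := by
        gcongr
        exact norm_fst_le (y - x)
      calc (K : ℝ) * _ ≤ K * (2 * (‖y - x‖ / ‖x.1‖)) := by gcongr; linarith
        _ = _ := by ring
    · apply Real.le_sqrt_of_sq_le
      rcases max_choice ‖(y - x).1‖ ‖(y - x).2‖ with h | h <;>
        rw [Prod.norm_def, h] <;> simp
  set M := ∫⁻ z in ball (0 : EuclideanSpace ℝ (Fin k) × EuclideanSpace ℝ (Fin l)) 2,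
    ENNReal.ofReal (‖z‖ ^ (-(q - θ))) with hM
  have hMfin : M < ⊤ := by
    apply aux_lint
    · simp; omega
    · simp; linarith
  have hinner : ∀ x ∈ B, ∫⁻ y in B, ENNReal.ofReal (‖y - x‖ ^ (-(q - θ))) ≤ M := by
    intro x hx
    rw [hM, ← lintegral_indicator hBm, ← lintegral_indicator measurableSet_ball,
      ← lintegral_sub_right_eq_self ((ball _ _).indicator _) x]
    apply lintegral_mono
    intro y
    by_cases hy : y ∈ B
    · have hxy : y - x ∈ ball (0 : EuclideanSpace ℝ (Fin k) × EuclideanSpace ℝ (Fin l)) 2 := by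
        have h1 := hBb hx
        have h2 := hBb hy
        rw [ball_prod_same, mem_ball, Prod.mk_zero_zero, dist_zero_right] at h1 h2
        rw [mem_ball_zero_iff]
        linarith [norm_sub_le y x]
      simp only [indicator_of_mem hy, indicator_of_mem hxy, le_refl]
    · simp [indicator_of_notMem hy]
  calc _ ≤ ∫⁻ x in B, ENNReal.ofReal (C * ‖x.1‖ ^ (-θ)) * M := by
        apply lintegral_mono_ae
        filter_upwards [ae_restrict_mem hBm, ae_restrict_of_ae hnull] with x hxB hx
        calc _ ≤ ∫⁻ y in B, ENNReal.ofReal (C * ‖x.1‖ ^ (-θ)) *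
                ENNReal.ofReal (‖y - x‖ ^ (-(q - θ))) := by
              apply lintegral_mono_ae
              filter_upwards [ae_restrict_of_ae hnull] with y hy
              rw [← ENNReal.ofReal_mul (by positivity)]
              exact ENNReal.ofReal_le_ofReal (hpt x y hx hy)
          _ = ENNReal.ofReal (C * ‖x.1‖ ^ (-θ)) *
                ∫⁻ y in B, ENNReal.ofReal (‖y - x‖ ^ (-(q - θ))) :=
              lintegral_const_mul' _ _ ENNReal.ofReal_ne_top
          _ ≤ _ := by gcongr; exact hinner x hxB
    _ = (∫⁻ x in B, ENNReal.ofReal (C * ‖x.1‖ ^ (-θ))) * M := lintegral_mul_const' _ _ hMfin.ne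
    _ < ⊤ := by
      refine ENNReal.mul_lt_top ?_ hMfin
      simp_rw [ENNReal.ofReal_mul hC0]
      rw [lintegral_const_mul' _ _ ENNReal.ofReal_ne_top]
      refine ENNReal.mul_lt_top ENNReal.ofReal_lt_top ?_
      refine (lintegral_mono_set hBb).trans_lt ?_
      rw [Measure.volume_eq_prod, setLIntegral_prod _ (by fun_prop)]
      simp only [lintegral_const, Measure.restrict_apply_univ]
      rw [lintegral_mul_const' _ _ measure_ball_lt_top.ne]
      refine ENNReal.mul_lt_top ?_ measure_ball_lt_top
      apply aux_lint
      · simp; omega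
      · simpa using hθ2

end
end
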